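/- Under condition (LD1), sup_{z∈ℝ} |F(z) − Φ(z)| ≤ r₁ + 4r₂ + 8r₃ + r₄ + 4.5r₅ + 1.5r₆, where r₁ = E|Σ_{i∈𝒥}(X_iY_i − EX_iY_i)|, r₂ = Σ_{i∈𝒥} E|X_iY_i|·1{|Y_i|>1}, r₃ = Σ_{i∈𝒥} E|X_i|(Y_i² ∧ 1), r₄ = Σ_{i∈𝒥} E{|W X_i|(Y_i² ∧ 1)}, r₅ = ∫_{|t|≤1} Var(K̂(t)) dt, and r₆ = (∫_{|t|≤1} |t| Var(K̂(t)) dt)^{1/2}. -/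

import Mathlib

open MeasureTheory ProbabilityTheory Real

noncomputable def stdGaussianCDF : ℝ → ℝ :=
  fun z => ∫ x in Set.Iic z, (Real.sqrt (2 * Real.pi))⁻¹ * Real.exp (-x ^ 2 / 2)

/-!
Stein's method with the random kernel `K̂`. Since `X i` is independent of `W - Y i`, writing
`f (W) - f (W - Y i)` as an integral of `f'` gives `E[W f(W)] = E ∫ f'(W + t) K̂(t) dt` up to
the part of `K̂` lying outside `[-1, 1]`, which costs `r₂`.

Taking for `f'` a trapezoidal bump around `[a, b]` makes `|f|` at most half the length of the
bump. Splitting `K̂ = K + (K̂ - K)` and applying `x y ≥ -(x² / 8 + 2 y²)` to the fluctuation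
yields a concentration inequality for `P(a < W ≤ b)`. The error of replacing `W + t` by `W` in the
`K` part is itself controlled by the concentration function of `W` at the scale `2 r₃`, and at that
scale it is absorbed into the left-hand side.

Taking for `f` the Stein solution of a ramp of width `α`, the same splitting compares `W` with the
normal law on ramps, the concentration inequality controlling the increments of the ramp. The choice
`α = 12.5 r₃ + 8 r₂ + 8 r₅` makes the concentration function at scale `α` at most `9 α / 8`, and
passing from ramps to indicators costs `α / 5`, as the normal density is at most `2 / 5`.
-/

section SteinEquation

open Set Filter Topology

local notation "φ" => gaussianPDFReal 0 1

lemma continuous_gaussianPDFReal (m : ℝ) (v : NNReal) : Continuous (gaussianPDFReal m v) := by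
  unfold gaussianPDFReal
  fun_prop

lemma hasDerivAt_gaussianPDFReal (m : ℝ) (v : NNReal) (x : ℝ) :
    HasDerivAt (gaussianPDFReal m v) (-(x - m) / v * gaussianPDFReal m v x) x := by
  have hexponent : HasDerivAt (fun y : ℝ => -(y - m) ^ 2 / (2 * v)) (-(x - m) / v) x := by
    refine ((((hasDerivAt_id x).sub_const m).pow 2).neg.div_const (2 * (v : ℝ))).congr_deriv ?_
    simp only [id_eq, Nat.cast_ofNat, Nat.add_one_sub_one, pow_one, mul_one]
    rw [← mul_neg, mul_div_mul_left _ _ two_ne_zero]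
  refine (hexponent.exp.const_mul (√(2 * π * v))⁻¹).congr_deriv ?_
  rw [gaussianPDFReal]
  ring

lemma hasDerivAt_stdGaussianPDF (x : ℝ) : HasDerivAt φ (-x * φ x) x := by
  simpa using hasDerivAt_gaussianPDFReal 0 1 x

lemma stdGaussianPDF_pos (x : ℝ) : 0 < φ x :=
  gaussianPDFReal_pos 0 1 x one_ne_zero

lemma stdGaussianPDF_neg (x : ℝ) : φ (-x) = φ x := by
  simp [gaussianPDFReal]

lemma stdGaussianPDF_le (x : ℝ) : φ x ≤ 2 / 5 := by
  have hsqrt : (5 / 2 : ℝ) ≤ √(2 * π) := Real.le_sqrt_of_sq_le (by nlinarith [pi_gt_d2])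
  calc φ x = (√(2 * π))⁻¹ * rexp (-x ^ 2 / 2) := by simp [gaussianPDFReal]
    _ ≤ (5 / 2 : ℝ)⁻¹ * 1 := by
      gcongr
      exact exp_le_one_iff.2 (by nlinarith [sq_nonneg x])
    _ = 2 / 5 := by norm_num

lemma tendsto_stdGaussianPDF_atTop : Tendsto φ atTop (𝓝 0) := by
  have hexponent : Tendsto (fun x : ℝ => -(x ^ 2 / 2)) atTop atBot :=
    tendsto_neg_atTop_atBot.comp ((tendsto_pow_atTop two_ne_zero).atTop_div_const two_pos)
  simpa [gaussianPDFReal_def, neg_div] using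
    (tendsto_exp_atBot.comp hexponent).const_mul (√(2 * π))⁻¹

lemma setIntegral_stdGaussianPDF_nonneg (s : Set ℝ) : 0 ≤ ∫ x in s, φ x :=
  integral_nonneg fun x => gaussianPDFReal_nonneg 0 1 x

lemma mul_integral_Ioi_stdGaussianPDF_le (w : ℝ) : w * ∫ x in Ioi w, φ x ≤ φ w := by
  rcases le_total w 0 with hw | hw
  · exact (mul_nonpos_of_nonpos_of_nonneg hw (setIntegral_stdGaussianPDF_nonneg _)).trans
      (stdGaussianPDF_pos w).le
  have hderiv : ∀ x ∈ Ici w, HasDerivAt (fun x => -φ x) (x * φ x) x := fun x _ =>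
    (hasDerivAt_stdGaussianPDF x).neg.congr_deriv (by ring)
  have hnonneg : ∀ x ∈ Ioi w, 0 ≤ x * φ x := fun x hx =>
    mul_nonneg (hw.trans (mem_Ioi.1 hx).le) (stdGaussianPDF_pos x).le
  have hlim : Tendsto (fun x => -φ x) atTop (𝓝 0) := by
    simpa using tendsto_stdGaussianPDF_atTop.neg
  calc w * ∫ x in Ioi w, φ x = ∫ x in Ioi w, w * φ x := (integral_const_mul _ _).symm
    _ ≤ ∫ x in Ioi w, x * φ x :=
      setIntegral_mono_on ((integrable_gaussianPDFReal 0 1).integrableOn.const_mul w)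
        (integrableOn_Ioi_deriv_of_nonneg' hderiv hnonneg hlim) measurableSet_Ioi
        fun x hx => mul_le_mul_of_nonneg_right (mem_Ioi.1 hx).le (stdGaussianPDF_pos x).le
    _ = φ w := by
      rw [integral_Ioi_of_hasDerivAt_of_nonneg' hderiv hnonneg hlim]
      ring

lemma neg_mul_integral_Iic_stdGaussianPDF_le (w : ℝ) : -w * ∫ x in Iic w, φ x ≤ φ w := by
  have hreflect : ∫ x in Iic w, φ x = ∫ x in Ioi (-w), φ x := by
    simpa only [stdGaussianPDF_neg] using integral_comp_neg_Iic w φ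
  simpa only [hreflect, stdGaussianPDF_neg] using mul_integral_Ioi_stdGaussianPDF_le (-w)

lemma stdGaussianCDF_eq_integral (z : ℝ) : stdGaussianCDF z = ∫ x in Iic z, φ x := by
  simp [stdGaussianCDF, gaussianPDFReal]

lemma stdGaussianCDF_eq_cdf (z : ℝ) : stdGaussianCDF z = cdf (gaussianReal 0 1) z := by
  rw [cdf_eq_real, measureReal_def, gaussianReal_apply_eq_integral 0 one_ne_zero,
    ENNReal.toReal_ofReal (setIntegral_stdGaussianPDF_nonneg _), stdGaussianCDF_eq_integral]

lemma stdGaussianCDF_sub_le {x y : ℝ} (hxy : x ≤ y) :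
    stdGaussianCDF y - stdGaussianCDF x ≤ 2 / 5 * (y - x) := by
  have hint : IntegrableOn φ (Iic x) ∧ IntegrableOn φ (Iic y) :=
    ⟨(integrable_gaussianPDFReal 0 1).integrableOn, (integrable_gaussianPDFReal 0 1).integrableOn⟩
  rw [stdGaussianCDF_eq_integral, stdGaussianCDF_eq_integral,
    intervalIntegral.integral_Iic_sub_Iic hint.1 hint.2]
  calc ∫ x in x..y, φ x ≤ ∫ _ in x..y, (2 / 5 : ℝ) :=
        intervalIntegral.integral_mono_on hxy
          ((continuous_gaussianPDFReal 0 1).intervalIntegrable _ _) (by simp)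
          fun x _ => stdGaussianPDF_le x
    _ = 2 / 5 * (y - x) := by
      rw [intervalIntegral.integral_const, smul_eq_mul, mul_comm]

/-- The solution `f` of Stein's equation `f' w = w * f w + (h w - ∫ h ∂γ)`, with `γ` the standard
normal law, that is bounded when `h` is. -/
noncomputable def steinSolution (h : ℝ → ℝ) (w : ℝ) : ℝ :=
  (φ w)⁻¹ * ∫ x in Iic w, (h x - ∫ y, h y ∂gaussianReal 0 1) * φ x

variable {h : ℝ → ℝ}

lemma integrable_mul_stdGaussianPDF (hcont : Continuous h) (hmem : ∀ x, h x ∈ Icc 0 1) :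
    Integrable fun x => h x * φ x :=
  (integrable_gaussianPDFReal 0 1).bdd_mul (c := 1) hcont.aestronglyMeasurable
    (ae_of_all _ fun x => by simpa [abs_of_nonneg (hmem x).1] using (hmem x).2)

lemma integral_stdGaussian_eq (h : ℝ → ℝ) : ∫ x, h x ∂gaussianReal 0 1 = ∫ x, h x * φ x := by
  simp only [integral_gaussianReal_eq_integral_smul one_ne_zero, smul_eq_mul, mul_comm]

lemma hasDerivAt_integral_Iic {g : ℝ → ℝ} (hcont : Continuous g) (hint : Integrable g) (w : ℝ) :
    HasDerivAt (fun w => ∫ x in Iic w, g x) (g w) w := by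
  have hsplit : (fun w => ∫ x in Iic w, g x) =
      fun w => (∫ x in Iic 0, g x) + ∫ x in (0 : ℝ)..w, g x := by
    funext w
    rw [← intervalIntegral.integral_Iic_sub_Iic hint.integrableOn hint.integrableOn,
      add_sub_cancel]
  rw [hsplit]
  exact (hcont.integral_hasStrictDerivAt 0 w).hasDerivAt.const_add _

lemma hasDerivAt_steinSolution (hcont : Continuous h) (hint : Integrable fun x => h x * φ x)
    (w : ℝ) :
    HasDerivAt (steinSolution h)
      (w * steinSolution h w + (h w - ∫ y, h y ∂gaussianReal 0 1)) w := by
  set N := ∫ y, h y ∂gaussianReal 0 1 with hN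
  have hcont' : Continuous fun x => (h x - N) * φ x :=
    (hcont.sub continuous_const).mul (continuous_gaussianPDFReal 0 1)
  have hint' : Integrable fun x => (h x - N) * φ x := by
    simp only [sub_mul]
    exact hint.sub ((integrable_gaussianPDFReal 0 1).const_mul N)
  have hφ : φ w ≠ 0 := (stdGaussianPDF_pos w).ne'
  refine (((hasDerivAt_stdGaussianPDF w).inv hφ).mul
    (hasDerivAt_integral_Iic hcont' hint' w)).congr_deriv ?_
  simp only [Pi.inv_apply, steinSolution, ← hN]
  field_simp

lemma abs_mul_sub_mul_add_sub_le_one {r a b p q η : ℝ} (hr : 0 ≤ r) (hrp : r * p ≤ 1)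
    (ha : a ∈ Icc 0 p) (hb : b ∈ Icc 0 q) (hpq : p + q = 1) (hη : η ∈ Icc 0 1) :
    |r * (b * p - a * q) + (η - (a + b))| ≤ 1 := by
  have hq : 0 ≤ q := hb.1.trans hb.2
  have hrpb : r * p * b ≤ b := mul_le_of_le_one_left hb.1 hrp
  have hrpq : r * p * (q - b) ≤ q - b := mul_le_of_le_one_left (sub_nonneg.2 hb.2) hrp
  have hraq : 0 ≤ r * (a * q) := mul_nonneg hr (mul_nonneg ha.1 hq)
  have hraq' : r * (a * q) ≤ r * (p * q) := by gcongr; exact ha.2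
  rw [abs_le]
  constructor <;> linarith [ha.1, ha.2, hη.1, hη.2]

lemma stdGaussianPDF_mul_steinSolution (hint : Integrable fun x => h x * φ x) (w : ℝ) :
    φ w * steinSolution h w =
      (∫ x in Iic w, h x * φ x) * (∫ x in Ioi w, φ x) -
        (∫ x in Ioi w, h x * φ x) * ∫ x in Iic w, φ x := by
  have hφ := integrable_gaussianPDFReal 0 1
  have hone := intervalIntegral.integral_Iic_add_Ioi (b := w) hφ.integrableOn hφ.integrableOn
  rw [integral_gaussianPDFReal_eq_one 0 one_ne_zero] at hone
  rw [steinSolution, mul_inv_cancel_left₀ (stdGaussianPDF_pos w).ne', integral_stdGaussian_eq,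
    ← intervalIntegral.integral_Iic_add_Ioi (b := w) hint.integrableOn hint.integrableOn]
  simp only [sub_mul]
  rw [integral_sub hint.integrableOn (hφ.integrableOn.const_mul _), integral_const_mul]
  linear_combination -(∫ x in Iic w, h x * φ x) * hone

lemma setIntegral_mul_stdGaussianPDF_mem_Icc (hcont : Continuous h) (hmem : ∀ x, h x ∈ Icc 0 1)
    (s : Set ℝ) : ∫ x in s, h x * φ x ∈ Icc 0 (∫ x in s, φ x) :=
  ⟨integral_nonneg fun x => mul_nonneg (hmem x).1 (stdGaussianPDF_pos x).le,
    integral_mono (integrable_mul_stdGaussianPDF hcont hmem).integrableOn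
      (integrable_gaussianPDFReal 0 1).integrableOn
      fun x => mul_le_of_le_one_left (stdGaussianPDF_pos x).le (hmem x).2⟩

lemma abs_deriv_steinSolution_le_one (hcont : Continuous h) (hmem : ∀ x, h x ∈ Icc 0 1) (w : ℝ) :
    |deriv (steinSolution h) w| ≤ 1 := by
  have hint := integrable_mul_stdGaussianPDF hcont hmem
  have hφint := integrable_gaussianPDFReal 0 1
  have hφ := stdGaussianPDF_pos w
  have hone := intervalIntegral.integral_Iic_add_Ioi (b := w) hφint.integrableOn
    hφint.integrableOn
  rw [integral_gaussianPDFReal_eq_one 0 one_ne_zero] at hone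
  have hsol : w * steinSolution h w = w / φ w * (φ w * steinSolution h w) := by field_simp
  rw [(hasDerivAt_steinSolution hcont hint w).deriv, hsol,
    stdGaussianPDF_mul_steinSolution hint, integral_stdGaussian_eq,
    ← intervalIntegral.integral_Iic_add_Ioi (b := w) hint.integrableOn hint.integrableOn]
  have hlow := setIntegral_mul_stdGaussianPDF_mem_Icc hcont hmem (Iic w)
  have hupp := setIntegral_mul_stdGaussianPDF_mem_Icc hcont hmem (Ioi w)
  rcases le_total 0 w with hw | hw
  · have hmills : w / φ w * ∫ x in Ioi w, φ x ≤ 1 := by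
      rw [div_mul_eq_mul_div, div_le_one hφ]
      exact mul_integral_Ioi_stdGaussianPDF_le w
    rw [add_comm (∫ x in Iic w, h x * φ x)]
    exact abs_mul_sub_mul_add_sub_le_one (by positivity) hmills hupp hlow
      (by linarith) (hmem w)
  · have hmills : -w / φ w * ∫ x in Iic w, φ x ≤ 1 := by
      rw [div_mul_eq_mul_div, div_le_one hφ]
      exact neg_mul_integral_Iic_stdGaussianPDF_le w
    convert abs_mul_sub_mul_add_sub_le_one (div_nonneg (neg_nonneg.2 hw) hφ.le) hmills hlow hupp
      hone (hmem w) using 2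
    ring

lemma abs_steinSolution_sub_le (hcont : Continuous h) (hmem : ∀ x, h x ∈ Icc 0 1) (v w : ℝ) :
    |steinSolution h v - steinSolution h w| ≤ |v - w| := by
  have hderiv x := hasDerivAt_steinSolution hcont (integrable_mul_stdGaussianPDF hcont hmem) x
  simpa using convex_univ.norm_image_sub_le_of_norm_deriv_le
    (fun x _ => (hderiv x).differentiableAt)
    (fun x _ => abs_deriv_steinSolution_le_one hcont hmem x) (mem_univ w) (mem_univ v)

lemma abs_mul_steinSolution_le (hcont : Continuous h) (hmem : ∀ x, h x ∈ Icc 0 1) (w : ℝ) :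
    |w * steinSolution h w| ≤ 2 := by
  have hint := integrable_mul_stdGaussianPDF hcont hmem
  have hmean : ∫ x, h x ∂gaussianReal 0 1 ∈ Icc 0 1 := by
    simpa [integral_stdGaussian_eq, integral_gaussianPDFReal_eq_one]
      using setIntegral_mul_stdGaussianPDF_mem_Icc hcont hmem univ
  have hbound := abs_deriv_steinSolution_le_one hcont hmem w
  rw [(hasDerivAt_steinSolution hcont hint w).deriv, abs_le] at hbound
  rw [abs_le]
  constructor <;> linarith [hbound.1, hbound.2, hmean.1, hmean.2, (hmem w).1, (hmem w).2]

lemma abs_steinSolution_le (hcont : Continuous h) (hmem : ∀ x, h x ∈ Icc 0 1) (w : ℝ) :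
    |steinSolution h w| ≤ 3 := by
  have hfar : ∀ v : ℝ, |v| = 1 → |steinSolution h v| ≤ 2 := fun v hv => by
    simpa [abs_mul, hv] using abs_mul_steinSolution_le hcont hmem v
  rcases le_total 1 |w| with hw | hw
  · have hmul := abs_mul_steinSolution_le hcont hmem w
    rw [abs_mul] at hmul
    nlinarith [abs_nonneg (steinSolution h w)]
  · obtain ⟨v, hv, hdist⟩ : ∃ v : ℝ, |v| = 1 ∧ |w - v| ≤ 1 := by
      rcases le_total 0 w with h0 | h0
      · exact ⟨1, abs_one, abs_le.2 ⟨by linarith, by linarith [abs_le.1 hw]⟩⟩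
      · exact ⟨-1, by simp, abs_le.2 ⟨by linarith [abs_le.1 hw], by linarith⟩⟩
    linarith [hfar v hv, abs_steinSolution_sub_le hcont hmem w v,
      abs_sub_abs_le_abs_sub (steinSolution h w) (steinSolution h v)]

lemma abs_mul_steinSolution_sub_le (hcont : Continuous h) (hmem : ∀ x, h x ∈ Icc 0 1)
    (v w : ℝ) : |v * steinSolution h v - w * steinSolution h w| ≤ |v - w| * (|v| + 3) := by
  have hsplit : v * steinSolution h v - w * steinSolution h w =
      v * (steinSolution h v - steinSolution h w) + (v - w) * steinSolution h w := by ring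
  calc _ ≤ |v| * |steinSolution h v - steinSolution h w| + |v - w| * |steinSolution h w| := by
        rw [hsplit, ← abs_mul, ← abs_mul]
        exact abs_add_le _ _
    _ ≤ |v| * |v - w| + |v - w| * 3 :=
        add_le_add
          (mul_le_mul_of_nonneg_left (abs_steinSolution_sub_le hcont hmem v w) (abs_nonneg _))
          (mul_le_mul_of_nonneg_left (abs_steinSolution_le hcont hmem w) (abs_nonneg _))
    _ = |v - w| * (|v| + 3) := by ring

lemma contDiff_steinSolution (hcont : Continuous h) (hmem : ∀ x, h x ∈ Icc 0 1) :
    ContDiff ℝ 1 (steinSolution h) := by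
  have hderiv := hasDerivAt_steinSolution hcont (integrable_mul_stdGaussianPDF hcont hmem)
  have hdiff : Differentiable ℝ (steinSolution h) := fun w => (hderiv w).differentiableAt
  refine contDiff_one_iff_deriv.2 ⟨hdiff, ?_⟩
  rw [funext fun w => (hderiv w).deriv]
  exact (continuous_id.mul hdiff.continuous).add (hcont.sub continuous_const)

lemma deriv_steinSolution (hcont : Continuous h) (hmem : ∀ x, h x ∈ Icc 0 1)
    (w : ℝ) : deriv (steinSolution h) w =
      w * steinSolution h w + (h w - ∫ y, h y ∂gaussianReal 0 1) :=
  (hasDerivAt_steinSolution hcont (integrable_mul_stdGaussianPDF hcont hmem) w).deriv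

lemma integral_deriv_steinSolution (hcont : Continuous h) (hmem : ∀ x, h x ∈ Icc 0 1)
    (P : Measure ℝ) [IsProbabilityMeasure P] :
    ∫ w, deriv (steinSolution h) w ∂P =
      ∫ w, w * steinSolution h w ∂P + (∫ w, h w ∂P - ∫ w, h w ∂gaussianReal 0 1) := by
  have hh_int : Integrable h P := .of_bound hcont.aestronglyMeasurable 1
    (ae_of_all _ fun w => by simpa [abs_of_nonneg (hmem w).1] using (hmem w).2)
  have hlinear_int : Integrable (fun w => w * steinSolution h w) P := .of_bound
    (continuous_id.mul (contDiff_steinSolution hcont hmem).continuous).aestronglyMeasurable 2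
    (ae_of_all _ fun w => abs_mul_steinSolution_le hcont hmem w)
  simp only [deriv_steinSolution hcont hmem]
  rw [integral_add hlinear_int (by fun_prop), integral_sub hh_int (integrable_const _),
    integral_const, probReal_univ, one_smul]

end SteinEquation

section Ramp

open Set

/-- The piecewise linear function equal to `1` on `(-∞, u]` and to `0` on `[u + α, ∞)`: a continuous
version of the indicator of a half line. -/
noncomputable def ramp (α u w : ℝ) : ℝ :=
  max 0 (min 1 ((u + α - w) / α))

variable {α : ℝ}

lemma continuous_ramp (α u : ℝ) : Continuous (ramp α u) := by
  unfold ramp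
  fun_prop

lemma ramp_mem_Icc (α u w : ℝ) : ramp α u w ∈ Icc 0 1 :=
  ⟨le_max_left _ _, max_le zero_le_one (min_le_left _ _)⟩

lemma ramp_add (α u w t : ℝ) : ramp α u (w + t) = ramp α (u - t) w := by
  simp only [ramp]
  ring_nf

lemma ramp_mono (hα : 0 < α) {u v : ℝ} (huv : u ≤ v) (w : ℝ) : ramp α u w ≤ ramp α v w := by
  unfold ramp
  gcongr

lemma ramp_eq_one (hα : 0 < α) {u w : ℝ} (hw : w ≤ u) : ramp α u w = 1 := by
  have : 1 ≤ (u + α - w) / α := (one_le_div hα).2 (by linarith)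
  simp [ramp, this]

lemma ramp_eq_zero (hα : 0 < α) {u w : ℝ} (hw : u + α ≤ w) : ramp α u w = 0 := by
  have : (u + α - w) / α ≤ 0 := div_nonpos_of_nonpos_of_nonneg (by linarith) hα.le
  simp [ramp, this.trans zero_le_one, this]

lemma integrable_ramp (P : Measure ℝ) [IsFiniteMeasure P] (α u : ℝ) : Integrable (ramp α u) P :=
  .of_bound (continuous_ramp α u).aestronglyMeasurable 1 <| ae_of_all _ fun w => by
    simpa [abs_of_nonneg (ramp_mem_Icc α u w).1] using (ramp_mem_Icc α u w).2

lemma ramp_eq_integral_indicator (hα : 0 < α) (u w : ℝ) :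
    ramp α u w = α⁻¹ * ∫ v in Ioc u (u + α), (Iic v).indicator 1 w := by
  have hswap : (fun v : ℝ => (Iic v).indicator (1 : ℝ → ℝ) w) = (Ici w).indicator 1 := by
    funext v
    simp [indicator_apply]
  have hae : (Ici w ∩ Ioc u (u + α) : Set ℝ) =ᵐ[volume] Ioc (max u w) (u + α) := by
    rw [← Ioc_inter_Ioi, inter_comm]
    exact (Filter.EventuallyEq.refl _ _).inter Ioi_ae_eq_Ici.symm
  rw [hswap, integral_indicator_one measurableSet_Ici, measureReal_restrict_apply measurableSet_Ici,
    measureReal_congr hae, Real.volume_real_Ioc, inv_mul_eq_div]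
  rcases le_total w u with hw | hw
  · simp [ramp_eq_one hα hw, hw, hα.le, hα.ne']
  · have hle : (u + α - w) / α ≤ 1 := (div_le_one hα).2 (by linarith)
    rw [ramp, min_eq_right hle, max_eq_right hw, ← max_div_div_right hα.le, zero_div, max_comm]

section SmoothedCDF

variable (P : Measure ℝ) [IsProbabilityMeasure P]

lemma integral_ramp_eq_integral_cdf (hα : 0 < α) (u : ℝ) :
    ∫ w, ramp α u w ∂P = α⁻¹ * ∫ v in u..u + α, cdf P v := by
  have hmeas : MeasurableSet {p : ℝ × ℝ | p.1 ≤ p.2} :=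
    measurableSet_le measurable_fst measurable_snd
  have hind : (Function.uncurry fun w v : ℝ => (Iic v).indicator (1 : ℝ → ℝ) w) =
      {p : ℝ × ℝ | p.1 ≤ p.2}.indicator 1 := by
    funext p
    simp [indicator_apply, Function.uncurry]
  simp only [ramp_eq_integral_indicator hα]
  rw [integral_const_mul, integral_integral_swap
      (by rw [hind]; exact (integrable_const (1 : ℝ)).indicator hmeas),
    intervalIntegral.integral_of_le (by linarith)]
  simp only [integral_indicator_one measurableSet_Iic, cdf_eq_real]

lemma integral_ramp_mono (hα : 0 < α) {u v : ℝ} (huv : u ≤ v) :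
    ∫ w, ramp α u w ∂P ≤ ∫ w, ramp α v w ∂P :=
  integral_mono (integrable_ramp P α u) (integrable_ramp P α v) (ramp_mono hα huv)

lemma cdf_le_integral_ramp (hα : 0 < α) (u : ℝ) : cdf P u ≤ ∫ w, ramp α u w ∂P := by
  rw [cdf_eq_real, ← integral_indicator_one measurableSet_Iic]
  refine integral_mono ((integrable_const 1).indicator measurableSet_Iic) (integrable_ramp P α u)
    fun w => indicator_le' (fun w hw => (ramp_eq_one hα hw).ge)
      (fun w _ => (ramp_mem_Icc α u w).1) w

lemma integral_ramp_le_cdf (hα : 0 < α) (u : ℝ) : ∫ w, ramp α u w ∂P ≤ cdf P (u + α) := by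
  rw [cdf_eq_real, ← integral_indicator_one measurableSet_Iic]
  refine integral_mono (integrable_ramp P α u) ((integrable_const 1).indicator measurableSet_Iic)
    fun w => le_indicator (fun w _ => (ramp_mem_Icc α u w).2)
      (fun w hw => (ramp_eq_zero hα (not_le.1 hw).le).le) w

lemma integral_ramp_sub_le {S : ℝ} (hα : 0 < α)
    (hS : ∀ x, cdf P (x + α) - cdf P x ≤ S) {u v : ℝ} (huv : u ≤ v) :
    ∫ w, ramp α v w ∂P - ∫ w, ramp α u w ∂P ≤ (v - u) * (S / α) := by
  have hint (a b : ℝ) : IntervalIntegrable (cdf P) volume a b :=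
    (monotone_cdf P).intervalIntegrable
  have hint' : IntervalIntegrable (fun x => cdf P (x + α)) volume u v :=
    ((monotone_cdf P).comp (monotone_id.add_const α)).intervalIntegrable
  rw [integral_ramp_eq_integral_cdf P hα, integral_ramp_eq_integral_cdf P hα, ← mul_sub]
  calc α⁻¹ * ((∫ x in v..v + α, cdf P x) - ∫ x in u..u + α, cdf P x)
      = α⁻¹ * ∫ x in u..v, (cdf P (x + α) - cdf P x) := by
        rw [intervalIntegral.integral_sub hint' (hint _ _),
          intervalIntegral.integral_comp_add_right,
          intervalIntegral.integral_interval_sub_interval_comm (hint _ _) (hint _ _) (hint _ _),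
          intervalIntegral.integral_symm u v, intervalIntegral.integral_symm (u + α) (v + α)]
        ring
    _ ≤ α⁻¹ * ∫ _ in u..v, S := by
        gcongr
        exact intervalIntegral.integral_mono_on huv (hint'.sub (hint _ _)) (by simp)
          fun x _ => hS x
    _ = (v - u) * (S / α) := by
        rw [intervalIntegral.integral_const, smul_eq_mul]
        ring

lemma abs_integral_ramp_sub_le {S : ℝ} (hα : 0 < α)
    (hS : ∀ x, cdf P (x + α) - cdf P x ≤ S) (u v : ℝ) :
    |∫ w, ramp α v w ∂P - ∫ w, ramp α u w ∂P| ≤ |v - u| * (S / α) := by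
  wlog huv : u ≤ v generalizing u v
  · rw [abs_sub_comm, abs_sub_comm v]
    exact this v u (not_le.1 huv).le
  rw [abs_of_nonneg (sub_nonneg.2 (integral_ramp_mono P hα huv)),
    abs_of_nonneg (sub_nonneg.2 huv)]
  exact integral_ramp_sub_le P hα hS huv

end SmoothedCDF

lemma integral_const_add_mul (a b c d : ℝ) :
    ∫ v in a..b, (c + d * v) = (b - a) * (c + d * (a + b) / 2) := by
  rw [intervalIntegral.integral_add (by simp) (Continuous.intervalIntegrable (by fun_prop) _ _),
    intervalIntegral.integral_const, intervalIntegral.integral_const_mul, integral_id, smul_eq_mul]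
  ring

lemma integral_ramp_stdGaussian_le (hα : 0 < α) (z : ℝ) :
    ∫ w, ramp α z w ∂gaussianReal 0 1 ≤ stdGaussianCDF z + α / 5 := by
  rw [integral_ramp_eq_integral_cdf _ hα, inv_mul_le_iff₀ hα]
  calc ∫ v in z..z + α, cdf (gaussianReal 0 1) v
      ≤ ∫ v in z..z + α, (stdGaussianCDF z - 2 / 5 * z + 2 / 5 * v) := by
        refine intervalIntegral.integral_mono_on (by linarith)
          (monotone_cdf _).intervalIntegrable
          (Continuous.intervalIntegrable (by fun_prop) _ _) fun v hv => ?_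
        rw [← stdGaussianCDF_eq_cdf]
        linarith [stdGaussianCDF_sub_le hv.1]
    _ = α * (stdGaussianCDF z + α / 5) := by
        rw [integral_const_add_mul]
        ring

lemma stdGaussianCDF_le_integral_ramp (hα : 0 < α) (z : ℝ) :
    stdGaussianCDF z - α / 5 ≤ ∫ w, ramp α (z - α) w ∂gaussianReal 0 1 := by
  rw [integral_ramp_eq_integral_cdf _ hα, le_inv_mul_iff₀ hα, sub_add_cancel]
  calc α * (stdGaussianCDF z - α / 5)
      = ∫ v in z - α..z, (stdGaussianCDF z - 2 / 5 * z + 2 / 5 * v) := by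
        rw [integral_const_add_mul]
        ring
    _ ≤ ∫ v in z - α..z, cdf (gaussianReal 0 1) v := by
        refine intervalIntegral.integral_mono_on (by linarith)
          (Continuous.intervalIntegrable (by fun_prop) _ _)
          (monotone_cdf _).intervalIntegrable fun v hv => ?_
        rw [← stdGaussianCDF_eq_cdf]
        linarith [stdGaussianCDF_sub_le hv.2]

lemma abs_cdf_sub_stdGaussianCDF_le (P : Measure ℝ) [IsProbabilityMeasure P] {δ : ℝ}
    (hα : 0 < α)
    (hδ : ∀ u, |∫ w, ramp α u w ∂P - ∫ w, ramp α u w ∂gaussianReal 0 1| ≤ δ) (z : ℝ) :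
    |cdf P z - stdGaussianCDF z| ≤ δ + α / 5 := by
  have hupper := (abs_le.1 (hδ z)).2
  have hlower := (abs_le.1 (hδ (z - α))).1
  have hcdf := integral_ramp_le_cdf P hα (z - α)
  rw [sub_add_cancel] at hcdf
  rw [abs_le]
  constructor <;>
    linarith [cdf_le_integral_ramp P hα z, integral_ramp_stdGaussian_le hα z,
      stdGaussianCDF_le_integral_ramp hα z]

end Ramp

section SteinKernel

open Set

/-- Lebesgue measure on `[-1, 1]`, over which the shifts `t` of `W` are integrated. -/
noncomputable abbrev window : Measure ℝ :=
  volume.restrict (Icc (-1) 1)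

/-- The signed kernel `t ↦ 1{-y ≤ t < 0} - 1{0 ≤ t ≤ -y}` representing `g ↦ ∫ t in -y..0, g t`. -/
noncomputable def steinKernel (y t : ℝ) : ℝ :=
  (if -y ≤ t ∧ t < 0 then 1 else 0) - (if 0 ≤ t ∧ t ≤ -y then 1 else 0)

/-- The point of `[-1, 1]` closest to `y`. -/
noncomputable def clip (y : ℝ) : ℝ :=
  max (-1) (min 1 y)

lemma ae_window_abs_le_one : ∀ᵐ t ∂window, |t| ≤ 1 :=
  ae_restrict_of_forall_mem measurableSet_Icc fun _ ht => abs_le.2 ht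

lemma ae_prod_window_abs_le_one {Ω : Type*} [MeasurableSpace Ω] (μ : Measure Ω) :
    ∀ᵐ p ∂μ.prod window, |p.2| ≤ 1 :=
  Measure.quasiMeasurePreserving_snd.ae ae_window_abs_le_one

lemma window_real_univ : window.real univ = 2 := by
  norm_num [measureReal_restrict_apply]

lemma abs_clip_le_one (y : ℝ) : |clip y| ≤ 1 :=
  abs_le.2 ⟨le_max_left _ _, max_le (by norm_num) (min_le_left _ _)⟩

lemma clip_sq (y : ℝ) : clip y ^ 2 = min (y ^ 2) 1 := by
  unfold clip
  rcases le_total y (-1) with hlow | hlow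
  · rw [min_eq_right (by linarith), max_eq_left hlow, min_eq_right (by nlinarith)]
    norm_num
  rcases le_total 1 y with hupp | hupp
  · rw [min_eq_left hupp, max_eq_right (by norm_num), min_eq_right (by nlinarith)]
    norm_num
  · rw [min_eq_right hupp, max_eq_right hlow, min_eq_left (by nlinarith)]

lemma abs_sub_clip_le (y : ℝ) : |y - clip y| ≤ if 1 < |y| then |y| else 0 := by
  unfold clip
  split_ifs with hy
  · rcases lt_abs.1 hy with hupp | hlow
    · rw [min_eq_left hupp.le, max_eq_right (by norm_num), abs_le, abs_of_pos (by linarith)]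
      constructor <;> linarith
    · rw [min_eq_right (by linarith), max_eq_left (by linarith), abs_le,
        abs_of_neg (by linarith)]
      constructor <;> linarith
  · obtain ⟨hlow, hupp⟩ := abs_le.1 (not_lt.1 hy)
    rw [min_eq_right hupp, max_eq_right hlow, sub_self, abs_zero]

lemma measurable_steinKernel : Measurable fun p : ℝ × ℝ => steinKernel p.1 p.2 := by
  refine .sub (.ite ?_ measurable_const measurable_const)
    (.ite ?_ measurable_const measurable_const)
  · exact (measurableSet_le measurable_fst.neg measurable_snd).inter
      (measurableSet_lt measurable_snd measurable_const)
  · exact (measurableSet_le measurable_const measurable_snd).inter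
      (measurableSet_le measurable_snd measurable_fst.neg)

lemma abs_steinKernel_le_one (y t : ℝ) : |steinKernel y t| ≤ 1 := by
  unfold steinKernel
  split_ifs <;> norm_num

lemma abs_mul_steinKernel_of_nonneg {y : ℝ} (hy : 0 ≤ y) (t : ℝ) :
    |t| * |steinKernel y t| = |t| * steinKernel y t := by
  rcases eq_or_ne t 0 with rfl | ht
  · simp
  · have hpos : ¬(0 ≤ t ∧ t ≤ -y) := fun h => ht (by linarith)
    rw [steinKernel, if_neg hpos, sub_zero]
    split_ifs <;> simp

lemma abs_mul_steinKernel_of_nonpos {y : ℝ} (hy : y ≤ 0) (t : ℝ) :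
    |t| * |steinKernel y t| = -(|t| * steinKernel y t) := by
  have hneg : ¬(-y ≤ t ∧ t < 0) := fun h => by linarith
  rw [steinKernel, if_neg hneg, zero_sub, abs_neg]
  split_ifs <;> simp

lemma mul_steinKernel_ae_eq (g : ℝ → ℝ) (y : ℝ) :
    (fun t => g t * steinKernel y t) =ᵐ[window]
      fun t => (Ioc (-clip y) 0).indicator g t - (Ioc 0 (-clip y)).indicator g t := by
  have hne (a : ℝ) : ∀ᵐ t ∂window, t ≠ a :=
    ae_restrict_of_ae (by simp [ae_iff, measure_singleton])
  filter_upwards [hne 0, hne (-1), hne (-y), ae_window_abs_le_one] with t ht0 ht1 hty ht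
  obtain ⟨hlow, hupp⟩ := abs_le.1 ht
  simp only [steinKernel, indicator_apply, mem_Ioc, clip]
  grind

lemma integral_mul_steinKernel {g : ℝ → ℝ} (hg : Integrable g window) (y : ℝ) :
    ∫ t, g t * steinKernel y t ∂window = ∫ t in -clip y..0, g t := by
  have hclip := abs_le.1 (abs_clip_le_one y)
  have hsub : Ioc (-clip y) 0 ⊆ Icc (-1) 1 :=
    Ioc_subset_Icc_self.trans (Icc_subset_Icc (by linarith) zero_le_one)
  have hsub' : Ioc 0 (-clip y) ⊆ Icc (-1) 1 :=
    Ioc_subset_Icc_self.trans (Icc_subset_Icc (by norm_num) (by linarith))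
  rw [integral_congr_ae (mul_steinKernel_ae_eq g y),
    integral_sub (hg.indicator measurableSet_Ioc) (hg.indicator measurableSet_Ioc),
    setIntegral_indicator measurableSet_Ioc, setIntegral_indicator measurableSet_Ioc,
    inter_eq_right.2 hsub, inter_eq_right.2 hsub', intervalIntegral]

lemma abs_intervalIntegral_sub_integral_mul_steinKernel_le {g : ℝ → ℝ} (hg : Continuous g) {M : ℝ}
    (hM : ∀ t, |g t| ≤ M) (y : ℝ) :
    |(∫ t in -y..0, g t) - ∫ t, g t * steinKernel y t ∂window| ≤
      M * if 1 < |y| then |y| else 0 := by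
  rw [integral_mul_steinKernel hg.continuousOn.integrableOn_Icc,
    intervalIntegral.integral_interval_sub_interval_comm (hg.intervalIntegrable _ _)
      (hg.intervalIntegrable _ _) (hg.intervalIntegrable _ _),
    intervalIntegral.integral_same, sub_zero]
  have hM0 : 0 ≤ M := (abs_nonneg _).trans (hM 0)
  calc |∫ t in -y..-clip y, g t| ≤ M * |-clip y - -y| :=
        intervalIntegral.norm_integral_le_of_norm_le_const (f := g) fun t _ => hM t
    _ = M * |y - clip y| := by rw [neg_sub_neg]
    _ ≤ M * if 1 < |y| then |y| else 0 := mul_le_mul_of_nonneg_left (abs_sub_clip_le y) hM0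

lemma integral_abs_mul_abs_steinKernel_le (y : ℝ) :
    ∫ t, |t| * |steinKernel y t| ∂window ≤ min (y ^ 2) 1 := by
  have hclip : |∫ t, |t| * steinKernel y t ∂window| ≤ min (y ^ 2) 1 := by
    rw [integral_mul_steinKernel continuous_abs.continuousOn.integrableOn_Icc, ← clip_sq, ← sq_abs,
      sq]
    have hbound : ∀ t ∈ uIoc (-clip y) 0, ‖|t|‖ ≤ |clip y| := fun t ht => by
      rw [norm_eq_abs, abs_abs]
      simpa using abs_sub_right_of_mem_uIcc (uIoc_subset_uIcc ht)
    simpa using intervalIntegral.norm_integral_le_of_norm_le_const hbound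
  rcases le_total 0 y with hy | hy
  · simp only [abs_mul_steinKernel_of_nonneg hy]
    exact (le_abs_self _).trans hclip
  · simp only [abs_mul_steinKernel_of_nonpos hy, integral_neg]
    exact (neg_le_abs _).trans hclip

section Product

variable {Ω : Type*} [MeasurableSpace Ω] {μ : Measure Ω} {Z Y : Ω → ℝ}

lemma integrable_mul_min_sq (hZ : Integrable Z μ) (hY : Measurable Y) :
    Integrable (fun ω => Z ω * min (Y ω ^ 2) 1) μ :=
  hZ.mul_bdd (c := 1) ((hY.pow_const 2).min measurable_const).aestronglyMeasurable <|
    ae_of_all _ fun ω => by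
      rw [norm_of_nonneg (le_min (sq_nonneg _) zero_le_one)]
      exact min_le_right _ _

lemma measurable_steinKernel_comp (hY : Measurable Y) :
    Measurable fun p : Ω × ℝ => steinKernel (Y p.1) p.2 :=
  measurable_steinKernel.comp ((hY.comp measurable_fst).prodMk measurable_snd)

lemma integrable_prod_mul_abs_steinKernel (hZ : Integrable Z μ) (hY : Measurable Y) :
    Integrable (fun p : Ω × ℝ => Z p.1 * (|p.2| * |steinKernel (Y p.1) p.2|))
      (μ.prod window) := by
  refine (hZ.comp_fst window).mul_bdd (c := 1)
    (measurable_snd.abs.mul (measurable_steinKernel_comp hY).abs).aestronglyMeasurable ?_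
  filter_upwards [ae_prod_window_abs_le_one μ] with p hp
  simpa [abs_mul] using mul_le_one₀ hp (abs_nonneg _) (abs_steinKernel_le_one (Y p.1) p.2)

lemma integral_prod_mul_abs_steinKernel_le [SFinite μ] (hZ : Integrable Z μ)
    (hZ0 : 0 ≤ Z) (hY : Measurable Y) :
    ∫ p, Z p.1 * (|p.2| * |steinKernel (Y p.1) p.2|) ∂μ.prod window ≤
      ∫ ω, Z ω * min (Y ω ^ 2) 1 ∂μ := by
  have hint := integrable_prod_mul_abs_steinKernel hZ hY
  rw [integral_prod _ hint]
  refine integral_mono hint.integral_prod_left (integrable_mul_min_sq hZ hY) fun ω => ?_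
  simp only [integral_const_mul]
  exact mul_le_mul_of_nonneg_left (integral_abs_mul_abs_steinKernel_le _) (hZ0 ω)

end Product

end SteinKernel

section CauchySchwarz

variable {α : Type*} [MeasurableSpace α] {ν : Measure α}

lemma abs_integral_mul_le_sqrt_mul_sqrt {f g : α → ℝ} (hf : MemLp f 2 ν) (hg : MemLp g 2 ν) :
    |∫ x, f x * g x ∂ν| ≤ √(∫ x, f x ^ 2 ∂ν) * √(∫ x, g x ^ 2 ∂ν) := by
  have hholder := integral_mul_le_Lp_mul_Lq_of_nonneg (μ := ν) .two_two
    (ae_of_all _ fun x => abs_nonneg (f x)) (ae_of_all _ fun x => abs_nonneg (g x))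
    (by simpa using! hf.abs) (by simpa using! hg.abs)
  simp only [rpow_two, sq_abs, ← sqrt_eq_rpow, ← abs_mul] at hholder
  exact abs_integral_le_integral_abs.trans hholder

lemma abs_integral_mul_le_sqrt_div_mul_sqrt {f g w : α → ℝ} (hf : AEStronglyMeasurable f ν)
    (hg : AEStronglyMeasurable g ν) (hw : AEStronglyMeasurable w ν) (hw0 : 0 ≤ w)
    (hfw : ∀ x, w x = 0 → f x = 0) (hf_int : Integrable (fun x => f x ^ 2 / w x) ν)
    (hg_int : Integrable (fun x => w x * g x ^ 2) ν) :
    |∫ x, f x * g x ∂ν| ≤ √(∫ x, f x ^ 2 / w x ∂ν) * √(∫ x, w x * g x ^ 2 ∂ν) := by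
  have hsqrt : AEStronglyMeasurable (fun x => √(w x)) ν :=
    continuous_sqrt.comp_aestronglyMeasurable hw
  have hf_sq (x : α) : (f x / √(w x)) ^ 2 = f x ^ 2 / w x := by rw [div_pow, sq_sqrt (hw0 x)]
  have hg_sq (x : α) : (√(w x) * g x) ^ 2 = w x * g x ^ 2 := by rw [mul_pow, sq_sqrt (hw0 x)]
  have hfg (x : α) : f x / √(w x) * (√(w x) * g x) = f x * g x := by
    rcases eq_or_ne (w x) 0 with hx | hx
    · simp [hx, hfw x hx]
    · rw [← mul_assoc, div_mul_cancel₀ _ ((sqrt_ne_zero (hw0 x)).2 hx)]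
  have hf_memLp : MemLp (fun x => f x / √(w x)) 2 ν :=
    (memLp_two_iff_integrable_sq (hf.div₀ hsqrt)).2 <| by
      simpa only [Pi.div_apply, hf_sq] using hf_int
  have hg_memLp : MemLp (fun x => √(w x) * g x) 2 ν :=
    (memLp_two_iff_integrable_sq (hsqrt.mul hg)).2 <| by
      simpa only [Pi.mul_apply, hg_sq] using hg_int
  simpa only [hf_sq, hg_sq, hfg] using abs_integral_mul_le_sqrt_mul_sqrt hf_memLp hg_memLp

end CauchySchwarz

section PlateauAntiderivative

open Set

variable {g : ℝ → ℝ} {c d : ℝ}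

lemma intervalIntegral_projIcc_eq_zero (hcd : c ≤ d) (hzero : ∀ x, x ∉ Ioo c d → g x = 0)
    (w : ℝ) : ∫ x in (projIcc c d hcd w : ℝ)..w, g x = 0 := by
  have hvanish : ∀ x ∈ uIcc (projIcc c d hcd w : ℝ) w, w ∉ Icc c d → g x = 0 := fun x hx hw => by
    refine hzero x fun hmem => hw ?_
    rw [coe_projIcc, mem_uIcc] at hx
    grind
  by_cases hw : w ∈ Icc c d
  · rw [projIcc_of_mem hcd hw, intervalIntegral.integral_same]
  · exact (intervalIntegral.integral_congr fun x hx => hvanish x hx hw).trans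
      intervalIntegral.integral_zero

lemma abs_integral_from_midpoint_le (hcd : c ≤ d) (hcont : Continuous g)
    (hmem : ∀ x, g x ∈ Icc 0 1) (hzero : ∀ x, x ∉ Ioo c d → g x = 0) (w : ℝ) :
    |∫ x in (c + d) / 2..w, g x| ≤ (d - c) / 2 := by
  have hproj := (projIcc c d hcd w).2
  rw [← intervalIntegral.integral_add_adjacent_intervals
    (hcont.intervalIntegrable _ (projIcc c d hcd w : ℝ)) (hcont.intervalIntegrable _ _),
    intervalIntegral_projIcc_eq_zero hcd hzero, add_zero]
  calc |∫ x in (c + d) / 2..projIcc c d hcd w, g x| ≤ 1 * |projIcc c d hcd w - (c + d) / 2| :=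
        intervalIntegral.norm_integral_le_of_norm_le_const (f := g) fun x _ => by
          simpa [abs_of_nonneg (hmem x).1] using (hmem x).2
    _ ≤ (d - c) / 2 := by
        rw [one_mul, abs_le]
        constructor <;> linarith [hproj.1, hproj.2]

lemma integral_window_sq_shift_le (hcd : c ≤ d) (hcont : Continuous g)
    (hmem : ∀ x, g x ∈ Icc 0 1) (hzero : ∀ x, x ∉ Ioo c d → g x = 0) (w : ℝ) :
    ∫ t, g (w + t) ^ 2 ∂window ≤ d - c := by
  have hle : ∀ t, g (w + t) ^ 2 ≤ (Icc (c - w) (d - w)).indicator 1 t := fun t => by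
    by_cases ht : t ∈ Icc (c - w) (d - w)
    · rw [indicator_of_mem ht]
      exact pow_le_one₀ (hmem (w + t)).1 (hmem (w + t)).2
    · have : w + t ∉ Ioo c d := fun h => ht ⟨by linarith [h.1], by linarith [h.2]⟩
      simp [ht, hzero _ this]
  have hsq : Integrable (fun t => g (w + t) ^ 2) window :=
    (Continuous.continuousOn (by fun_prop)).integrableOn_Icc
  calc ∫ t, g (w + t) ^ 2 ∂window
      ≤ ∫ t, (Icc (c - w) (d - w)).indicator 1 t ∂window :=
        integral_mono hsq ((integrable_const 1).indicator measurableSet_Icc) hle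
    _ = window.real (Icc (c - w) (d - w)) := integral_indicator_one measurableSet_Icc
    _ ≤ volume.real (Icc (c - w) (d - w)) :=
        ENNReal.toReal_mono (by simp) (Measure.restrict_apply_le _ _)
    _ = d - c := by
        rw [Real.volume_real_Icc_of_le (by linarith)]
        ring

end PlateauAntiderivative

section Shift

open Set

lemma abs_ramp_sub_le {α : ℝ} (hα : 0 < α) (u v w : ℝ) :
    |ramp α u v - ramp α u w| ≤ |v - w| / α := by
  calc |ramp α u v - ramp α u w| ≤ |(u + α - v) / α - (u + α - w) / α| := by
        unfold ramp
        rw [max_comm 0, max_comm 0, min_comm 1, min_comm 1]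
        exact (abs_max_sub_max_le_abs _ _ _).trans (abs_inf_sub_inf_le_abs _ _ _)
    _ = |v - w| / α := by
        rw [← sub_div, abs_div, abs_of_pos hα, sub_sub_sub_cancel_left, abs_sub_comm]

/-- The piecewise linear function equal to `1` on `[a, b]` and to `0` off `(a - γ, b + γ)`: a
continuous version of the indicator of an interval. -/
noncomputable def plateau (γ a b w : ℝ) : ℝ :=
  ramp γ b w - ramp γ (a - γ) w

variable {γ a b : ℝ}

lemma continuous_plateau (γ a b : ℝ) : Continuous (plateau γ a b) :=
  (continuous_ramp γ b).sub (continuous_ramp γ (a - γ))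

lemma plateau_mem_Icc (hγ : 0 < γ) (hab : a ≤ b) (w : ℝ) : plateau γ a b w ∈ Icc 0 1 := by
  have hle := ramp_mono hγ (by linarith : a - γ ≤ b) w
  unfold plateau
  constructor <;> linarith [(ramp_mem_Icc γ b w).2, (ramp_mem_Icc γ (a - γ) w).1]

lemma abs_plateau_le_one (hγ : 0 < γ) (hab : a ≤ b) (w : ℝ) : |plateau γ a b w| ≤ 1 :=
  abs_le.2 ⟨by linarith [(plateau_mem_Icc hγ hab w).1], (plateau_mem_Icc hγ hab w).2⟩

lemma plateau_eq_zero (hγ : 0 < γ) (hab : a ≤ b) {w : ℝ} (hw : w ∉ Ioo (a - γ) (b + γ)) :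
    plateau γ a b w = 0 := by
  unfold plateau
  rcases le_or_gt w (a - γ) with hle | hlt
  · rw [ramp_eq_one hγ hle, ramp_eq_one hγ (by linarith), sub_self]
  · have hge : b + γ ≤ w := not_lt.1 fun h => hw ⟨hlt, h⟩
    rw [ramp_eq_zero hγ hge, ramp_eq_zero hγ (by linarith), sub_self]

lemma cdf_sub_le_integral_plateau (P : Measure ℝ) [IsProbabilityMeasure P] (hγ : 0 < γ)
    (a b : ℝ) : cdf P b - cdf P a ≤ ∫ w, plateau γ a b w ∂P := by
  have hupper := integral_ramp_le_cdf P hγ (a - γ)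
  rw [sub_add_cancel] at hupper
  unfold plateau
  rw [integral_sub (integrable_ramp P γ b) (integrable_ramp P γ (a - γ))]
  linarith [cdf_le_integral_ramp P hγ b]

variable {P : Measure ℝ} [IsProbabilityMeasure P] {S : ℝ}

lemma integrable_ramp_shift (P : Measure ℝ) [IsProbabilityMeasure P] (γ u t : ℝ) :
    Integrable (fun w => ramp γ u (w + t) - ramp γ u w) P := by
  simp only [ramp_add]
  exact (integrable_ramp P γ (u - t)).sub (integrable_ramp P γ u)

lemma integral_ramp_shift (P : Measure ℝ) [IsProbabilityMeasure P] (γ u t : ℝ) :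
    ∫ w, (ramp γ u (w + t) - ramp γ u w) ∂P = ∫ w, ramp γ (u - t) w ∂P - ∫ w, ramp γ u w ∂P := by
  simp only [ramp_add]
  exact integral_sub (integrable_ramp P γ (u - t)) (integrable_ramp P γ u)

lemma abs_integral_ramp_shift_le (hγ : 0 < γ) (hS : ∀ x, cdf P (x + γ) - cdf P x ≤ S) (u t : ℝ) :
    |∫ w, (ramp γ u (w + t) - ramp γ u w) ∂P| ≤ |t| * (S / γ) := by
  simpa [integral_ramp_shift] using abs_integral_ramp_sub_le P hγ hS u (u - t)

lemma integral_ramp_shift_sq_le (hγ : 0 < γ) (hS : ∀ x, cdf P (x + γ) - cdf P x ≤ S) (u t : ℝ) :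
    ∫ w, (ramp γ u (w + t) - ramp γ u w) ^ 2 ∂P ≤ |t| * (S / γ) := by
  have habs : ∫ w, |ramp γ u (w + t) - ramp γ u w| ∂P =
      |∫ w, (ramp γ u (w + t) - ramp γ u w) ∂P| := by
    have hsign : (∀ w, ramp γ u w ≤ ramp γ u (w + t)) ∨ ∀ w, ramp γ u (w + t) ≤ ramp γ u w := by
      simp only [ramp_add]
      exact (le_total u (u - t)).imp (ramp_mono hγ) (ramp_mono hγ)
    rcases hsign with hle | hge
    · simp only [abs_of_nonneg (sub_nonneg.2 (hle _))]
      exact (abs_of_nonneg (integral_nonneg fun w => sub_nonneg.2 (hle w))).symm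
    · simp only [abs_of_nonpos (sub_nonpos.2 (hge _)), integral_neg]
      exact (abs_of_nonpos (integral_nonpos fun w => sub_nonpos.2 (hge w))).symm
  refine le_trans ?_ (habs.le.trans (abs_integral_ramp_shift_le hγ hS u t))
  refine integral_mono_of_nonneg (ae_of_all _ fun w => sq_nonneg _)
    (integrable_ramp_shift P γ u t).abs (ae_of_all _ fun w => ?_)
  have hle : |ramp γ u (w + t) - ramp γ u w| ≤ 1 :=
    (abs_sub_le_of_le_of_le (ramp_mem_Icc γ u _).1 (ramp_mem_Icc γ u _).2
      (ramp_mem_Icc γ u _).1 (ramp_mem_Icc γ u _).2).trans (by norm_num)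
  dsimp only
  rw [← sq_abs]
  exact pow_le_of_le_one (abs_nonneg _) hle two_ne_zero

lemma abs_integral_plateau_shift_le (hγ : 0 < γ) (hS : ∀ x, cdf P (x + γ) - cdf P x ≤ S)
    (a b t : ℝ) : |∫ w, (plateau γ a b (w + t) - plateau γ a b w) ∂P| ≤ |t| * (S / γ) := by
  have hdiff : ∫ w, (plateau γ a b (w + t) - plateau γ a b w) ∂P =
      (∫ w, ramp γ (b - t) w ∂P - ∫ w, ramp γ b w ∂P) -
        (∫ w, ramp γ (a - γ - t) w ∂P - ∫ w, ramp γ (a - γ) w ∂P) := by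
    rw [← integral_ramp_shift, ← integral_ramp_shift,
      ← integral_sub (integrable_ramp_shift P γ b t) (integrable_ramp_shift P γ (a - γ) t)]
    exact integral_congr_ae (ae_of_all _ fun w => sub_sub_sub_comm _ _ _ _)
  have hb := abs_integral_ramp_sub_le P hγ hS b (b - t)
  have ha := abs_integral_ramp_sub_le P hγ hS (a - γ) (a - γ - t)
  simp only [sub_sub_cancel_left, abs_neg] at ha hb
  rw [hdiff, abs_le]
  rw [abs_le] at ha hb
  rcases le_total 0 t with ht | ht
  · have hmono_b := integral_ramp_mono P hγ (sub_le_self b ht)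
    have hmono_a := integral_ramp_mono P hγ (sub_le_self (a - γ) ht)
    constructor <;> linarith
  · have hmono_b := integral_ramp_mono P hγ (by linarith : b ≤ b - t)
    have hmono_a := integral_ramp_mono P hγ (by linarith : a - γ ≤ a - γ - t)
    constructor <;> linarith

end Shift

section LocalDependence

variable {Ω ι : Type*} [Fintype ι]

/-- The sum `W` of the random field `X`. -/
def totalSum (X : ι → Ω → ℝ) (ω : Ω) : ℝ :=
  ∑ i, X i ω

/-- The random kernel `K̂(t)` of the Stein identity for `W`. -/
noncomputable def randomKernel (X Y : ι → Ω → ℝ) (t : ℝ) (ω : Ω) : ℝ :=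
  ∑ i, X i ω * steinKernel (Y i ω) t

lemma abs_randomKernel_le (X Y : ι → Ω → ℝ) (t : ℝ) (ω : Ω) :
    |randomKernel X Y t ω| ≤ ∑ i, |X i ω| * |steinKernel (Y i ω) t| := by
  simp only [← abs_mul]
  exact Finset.abs_sum_le_sum_abs _ _

lemma abs_sum_mul_intervalIntegral_sub_le (X Y : ι → Ω → ℝ) {g : ℝ → ℝ} (hg : Continuous g)
    {M : ℝ} (hM : ∀ t, |g t| ≤ M) (ω : Ω) :
    |∑ i, X i ω * (∫ t in -Y i ω..0, g t) - ∫ t, g t * randomKernel X Y t ω ∂window| ≤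
      M * ∑ i, if 1 < |Y i ω| then |X i ω * Y i ω| else 0 := by
  have hint (i : ι) : Integrable (fun t => g t * (X i ω * steinKernel (Y i ω) t)) window :=
    hg.continuousOn.integrableOn_Icc.mul_bdd (c := |X i ω|)
      ((measurable_steinKernel.comp measurable_prodMk_left).const_mul _).aestronglyMeasurable
      (ae_of_all _ fun t => by
        rw [norm_mul]
        exact mul_le_of_le_one_right (norm_nonneg _) (abs_steinKernel_le_one _ _))
  simp only [randomKernel, Finset.mul_sum]
  rw [integral_finsetSum _ fun i _ => hint i, ← Finset.sum_sub_distrib]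
  refine (Finset.abs_sum_le_sum_abs _ _).trans (Finset.sum_le_sum fun i _ => ?_)
  simp only [mul_left_comm (g _), integral_const_mul, ← mul_sub, abs_mul, ← mul_ite_zero]
  rw [mul_left_comm M]
  exact mul_le_mul_of_nonneg_left
    (abs_intervalIntegral_sub_integral_mul_steinKernel_le hg hM (Y i ω)) (abs_nonneg _)

lemma abs_sum_mul_sub_integral_randomKernel_le (X Y : ι → Ω → ℝ) (ω : Ω) :
    |∑ i, X i ω * Y i ω - ∫ t, randomKernel X Y t ω ∂window| ≤
      ∑ i, if 1 < |Y i ω| then |X i ω * Y i ω| else 0 := by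
  simpa using abs_sum_mul_intervalIntegral_sub_le X Y (continuous_const (y := 1)) (M := 1)
    (by simp) ω

variable [MeasurableSpace Ω] {μ : Measure Ω} {X Y : ι → Ω → ℝ}

/-- First-order local dependence, with `Y i` playing the role of the part of `W` that depends on
`X i`: the variables are centred, `W` has variance `1`, and `X i` is independent of `W - Y i`. -/
structure LocalDependence (μ : Measure Ω) (X Y : ι → Ω → ℝ) : Prop where
  measurable_left (i : ι) : Measurable (X i)
  measurable_right (i : ι) : Measurable (Y i)
  memLp_left (i : ι) : MemLp (X i) 2 μ
  integrable_mul (i : ι) : Integrable (fun ω => X i ω * Y i ω) μ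
  integral_left (i : ι) : ∫ ω, X i ω ∂μ = 0
  indepFun (i : ι) : IndepFun (X i) (fun ω => totalSum X ω - Y i ω) μ
  integral_totalSum_sq : ∫ ω, totalSum X ω ^ 2 ∂μ = 1

namespace LocalDependence

/-- The expectation `K(t)` of the random kernel `K̂(t)`. -/
noncomputable def meanKernel (μ : Measure Ω) (X Y : ι → Ω → ℝ) (t : ℝ) : ℝ :=
  ∫ ω, randomKernel X Y t ω ∂μ

/-- The fluctuation `K̂(t) - K(t)` of the random kernel, as a function on the product space. -/
noncomputable def kernelFluctuation (μ : Measure Ω) (X Y : ι → Ω → ℝ) (p : Ω × ℝ) : ℝ :=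
  randomKernel X Y p.2 p.1 - meanKernel μ X Y p.2

/-- The error term `r₁` of the normal approximation: the mean deviation of `∑ i, X i * Y i`. -/
noncomputable def r₁ (μ : Measure Ω) (X Y : ι → Ω → ℝ) : ℝ :=
  ∫ ω, |∑ i, (X i ω * Y i ω - ∫ ω', X i ω' * Y i ω' ∂μ)| ∂μ

/-- The error term `r₂` of the normal approximation: the cost of truncating the `Y i`. -/
noncomputable def r₂ (μ : Measure Ω) (X Y : ι → Ω → ℝ) : ℝ :=
  ∑ i, ∫ ω, (if 1 < |Y i ω| then |X i ω * Y i ω| else 0) ∂μ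

/-- The error term `r₃` of the normal approximation: a sum of truncated third moments. -/
noncomputable def r₃ (μ : Measure Ω) (X Y : ι → Ω → ℝ) : ℝ :=
  ∑ i, ∫ ω, |X i ω| * min (Y i ω ^ 2) 1 ∂μ

/-- The error term `r₄` of the normal approximation: truncated third moments weighted by `|W|`. -/
noncomputable def r₄ (μ : Measure Ω) (X Y : ι → Ω → ℝ) : ℝ :=
  ∑ i, ∫ ω, |totalSum X ω * X i ω| * min (Y i ω ^ 2) 1 ∂μ

/-- The error term `r₅` of the normal approximation: the integrated variance of `K̂`. -/
noncomputable def r₅ (μ : Measure Ω) (X Y : ι → Ω → ℝ) : ℝ :=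
  ∫ t, variance (randomKernel X Y t) μ ∂window

/-- The error term `r₆` of the normal approximation: the `L²` norm of the fluctuation of `K̂` with
weight `|t|`. -/
noncomputable def r₆ (μ : Measure Ω) (X Y : ι → Ω → ℝ) : ℝ :=
  √(∫ t, |t| * variance (randomKernel X Y t) μ ∂window)

lemma of_indepFun_compl [DecidableEq ι] {A : ι → Finset ι} (hmeas : ∀ i, Measurable (X i))
    (hmem : ∀ i, MemLp (X i) 2 μ) (hmean : ∀ i, ∫ ω, X i ω ∂μ = 0)
    (hindep : ∀ i, IndepFun (X i) (fun ω => fun j : ((A i)ᶜ : Finset ι) => X j.1 ω) μ)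
    (hvar : ∫ ω, totalSum X ω ^ 2 ∂μ = 1) :
    LocalDependence μ X (fun i ω => ∑ j ∈ A i, X j ω) where
  measurable_left := hmeas
  measurable_right i := Finset.measurable_sum _ fun j _ => hmeas j
  memLp_left := hmem
  integrable_mul i := (hmem i).integrable_mul (memLp_finsetSum (A i) fun j _ => hmem j)
  integral_left := hmean
  indepFun i := by
    have hcompl (ω : Ω) : totalSum X ω - ∑ j ∈ A i, X j ω =
        ∑ j : ((A i)ᶜ : Finset ι), X j.1 ω := by
      rw [totalSum, ← Finset.sum_add_sum_compl (A i), add_sub_cancel_left,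
        Finset.sum_coe_sort _ fun j => X j ω]
    simp only [hcompl]
    exact (hindep i).comp measurable_id
      (Finset.measurable_fun_sum _ fun j _ => measurable_pi_apply j)
  integral_totalSum_sq := hvar

lemma r₂_nonneg (μ : Measure Ω) (X Y : ι → Ω → ℝ) : 0 ≤ r₂ μ X Y :=
  Finset.sum_nonneg fun _ _ => integral_nonneg fun _ => by
    dsimp only [Pi.zero_apply]
    positivity

lemma r₅_nonneg (μ : Measure Ω) (X Y : ι → Ω → ℝ) : 0 ≤ r₅ μ X Y :=
  integral_nonneg fun _ => variance_nonneg _ _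

lemma measurable_totalSum (h : LocalDependence μ X Y) : Measurable (totalSum X) :=
  Finset.measurable_sum _ fun i _ => h.measurable_left i

lemma memLp_totalSum (h : LocalDependence μ X Y) : MemLp (totalSum X) 2 μ :=
  memLp_finsetSum _ fun i _ => h.memLp_left i

lemma measurable_randomKernel (h : LocalDependence μ X Y) :
    Measurable fun p : Ω × ℝ => randomKernel X Y p.2 p.1 :=
  Finset.measurable_sum _ fun i _ =>
    ((h.measurable_left i).comp measurable_fst).mul
      (measurable_steinKernel_comp (h.measurable_right i))

lemma memLp_randomKernel (h : LocalDependence μ X Y) :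
    MemLp (fun p : Ω × ℝ => randomKernel X Y p.2 p.1) 2 (μ.prod window) := by
  refine memLp_finsetSum _ fun i _ => ((h.memLp_left i).comp_fst window).of_le
    (((h.measurable_left i).comp measurable_fst).mul
      (measurable_steinKernel_comp (h.measurable_right i))).aestronglyMeasurable
    (ae_of_all _ fun p => ?_)
  rw [norm_mul]
  exact mul_le_of_le_one_right (norm_nonneg _) (abs_steinKernel_le_one _ _)

lemma integral_kernelFluctuation_sq_left (h : LocalDependence μ X Y) (t : ℝ) :
    ∫ ω, kernelFluctuation μ X Y (ω, t) ^ 2 ∂μ = variance (randomKernel X Y t) μ :=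
  (variance_eq_integral
    (h.measurable_randomKernel.comp measurable_prodMk_right : Measurable _).aemeasurable).symm

lemma integral_mul_comp_sub_eq_zero (h : LocalDependence μ X Y) {f : ℝ → ℝ} (hf : Measurable f)
    (i : ι) : ∫ ω, X i ω * f (totalSum X ω - Y i ω) ∂μ = 0 := by
  have hindep := (h.indepFun i).comp measurable_id hf
  have hprod := hindep.integral_mul_eq_mul_integral (h.measurable_left i).aestronglyMeasurable
    (hf.comp (h.measurable_totalSum.sub (h.measurable_right i))).aestronglyMeasurable
  simpa [h.integral_left i] using hprod

lemma sum_integral_mul (h : LocalDependence μ X Y) :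
    ∑ i, ∫ ω, X i ω * Y i ω ∂μ = 1 := by
  have hXW (i : ι) : Integrable (fun ω => X i ω * totalSum X ω) μ :=
    (h.memLp_left i).integrable_mul h.memLp_totalSum
  have hcov (i : ι) : ∫ ω, X i ω * Y i ω ∂μ = ∫ ω, X i ω * totalSum X ω ∂μ := by
    have hzero := h.integral_mul_comp_sub_eq_zero measurable_id i
    simp only [id_eq, mul_sub] at hzero
    rw [integral_sub (hXW i) (h.integrable_mul i)] at hzero
    linarith
  calc ∑ i, ∫ ω, X i ω * Y i ω ∂μ = ∫ ω, ∑ i, X i ω * totalSum X ω ∂μ := by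
        rw [integral_finsetSum _ fun i _ => hXW i, Finset.sum_congr rfl fun i _ => hcov i]
    _ = ∫ ω, totalSum X ω ^ 2 ∂μ := by simp only [← Finset.sum_mul, ← totalSum.eq_1, sq]
    _ = 1 := h.integral_totalSum_sq

lemma integrable_truncation (h : LocalDependence μ X Y) (i : ι) :
    Integrable (fun ω => if 1 < |Y i ω| then |X i ω * Y i ω| else 0) μ :=
  (h.integrable_mul i).abs.indicator (measurableSet_lt measurable_const (h.measurable_right i).abs)

lemma integral_sum_truncation (h : LocalDependence μ X Y) :
    ∫ ω, ∑ i, (if 1 < |Y i ω| then |X i ω * Y i ω| else 0) ∂μ = r₂ μ X Y :=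
  integral_finsetSum _ fun i _ => h.integrable_truncation i

lemma measurable_comp_shift (h : LocalDependence μ X Y) {g : ℝ → ℝ} (hg : Measurable g) :
    Measurable fun p : Ω × ℝ => g (totalSum X p.1 + p.2) :=
  hg.comp ((h.measurable_totalSum.comp measurable_fst).add measurable_snd)

lemma measurable_comp_shift_sub (h : LocalDependence μ X Y) {g : ℝ → ℝ} (hg : Measurable g) :
    Measurable fun p : Ω × ℝ => g (totalSum X p.1 + p.2) - g (totalSum X p.1) :=
  (h.measurable_comp_shift hg).sub (hg.comp (h.measurable_totalSum.comp measurable_fst))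

lemma integrable_comp_shift_sub_mul (h : LocalDependence μ X Y) {g : ℝ → ℝ} (hg : Measurable g)
    {C : ℝ} (hC : ∀ x, |g x| ≤ C) {k : Ω × ℝ → ℝ} (hk : Integrable k (μ.prod window)) :
    Integrable (fun p => (g (totalSum X p.1 + p.2) - g (totalSum X p.1)) * k p)
      (μ.prod window) :=
  hk.bdd_mul (c := C + C) (h.measurable_comp_shift_sub hg).aestronglyMeasurable
    (ae_of_all _ fun _ => (abs_sub _ _).trans (add_le_add (hC _) (hC _)))

lemma integrable_mul_sub_comp (h : LocalDependence μ X Y) {f : ℝ → ℝ} {M : NNReal}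
    (hf : LipschitzWith M f) (i : ι) :
    Integrable (fun ω => X i ω * (f (totalSum X ω) - f (totalSum X ω - Y i ω))) μ := by
  have hfW := hf.continuous.measurable.comp h.measurable_totalSum
  have hfV := hf.continuous.measurable.comp (h.measurable_totalSum.sub (h.measurable_right i))
  refine ((h.integrable_mul i).const_mul M).mono
    ((h.measurable_left i).mul (hfW.sub hfV)).aestronglyMeasurable (ae_of_all _ fun ω => ?_)
  have hdist := hf.dist_le_mul (totalSum X ω) (totalSum X ω - Y i ω)
  simp only [dist_eq, sub_sub_cancel] at hdist
  simp only [norm_mul, norm_eq_abs, NNReal.abs_eq, mul_left_comm (M : ℝ)]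
  exact mul_le_mul_of_nonneg_left hdist (abs_nonneg _)

section Probability

variable [IsProbabilityMeasure μ]

lemma integrable_left (h : LocalDependence μ X Y) (i : ι) : Integrable (X i) μ :=
  (h.memLp_left i).integrable one_le_two

lemma integral_abs_totalSum_le_one (h : LocalDependence μ X Y) : ∫ ω, |totalSum X ω| ∂μ ≤ 1 := by
  simpa [h.integral_totalSum_sq] using
    (le_abs_self _).trans (abs_integral_mul_le_sqrt_mul_sqrt h.memLp_totalSum.abs
      (memLp_const (1 : ℝ)))

lemma r₃_pos (h : LocalDependence μ X Y) : 0 < r₃ μ X Y := by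
  have hnonneg (i : ι) : 0 ≤ fun ω => |X i ω| * min (Y i ω ^ 2) 1 := fun ω =>
    mul_nonneg (abs_nonneg _) (le_min (sq_nonneg _) zero_le_one)
  refine (Finset.sum_nonneg fun i _ => integral_nonneg (hnonneg i)).lt_of_ne' fun hzero => ?_
  refine one_ne_zero (h.sum_integral_mul.symm.trans (Finset.sum_eq_zero fun i _ => ?_))
  have hzero_i := (Finset.sum_eq_zero_iff_of_nonneg
    fun i _ => integral_nonneg (hnonneg i)).1 hzero i (Finset.mem_univ i)
  rw [integral_eq_zero_iff_of_nonneg (hnonneg i)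
    (integrable_mul_min_sq (h.integrable_left i).abs (h.measurable_right i))] at hzero_i
  refine integral_eq_zero_of_ae (hzero_i.mono fun ω hω => ?_)
  rcases mul_eq_zero.1 hω with hX | hY
  · simp [abs_eq_zero.1 hX]
  · have hY0 : Y i ω = 0 := by
      rcases min_choice (Y i ω ^ 2) 1 with hmin | hmin <;> simp_all
    simp [hY0]

lemma measurable_meanKernel (h : LocalDependence μ X Y) : Measurable (meanKernel μ X Y) :=
  h.measurable_randomKernel.stronglyMeasurable.integral_prod_left'.measurable

lemma integrable_randomKernel (h : LocalDependence μ X Y) :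
    Integrable (fun p : Ω × ℝ => randomKernel X Y p.2 p.1) (μ.prod window) :=
  h.memLp_randomKernel.integrable one_le_two

lemma abs_meanKernel_le (h : LocalDependence μ X Y) (t : ℝ) :
    |meanKernel μ X Y t| ≤ ∑ i, ∫ ω, |X i ω| ∂μ := by
  rw [← integral_finsetSum _ fun i _ => (h.integrable_left i).abs]
  refine norm_integral_le_of_norm_le (f := randomKernel X Y t)
    (integrable_finsetSum _ fun i _ => (h.integrable_left i).abs)
    (ae_of_all _ fun ω => ?_)
  exact (abs_randomKernel_le X Y t ω).trans (Finset.sum_le_sum fun i _ =>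
    mul_le_of_le_one_right (abs_nonneg _) (abs_steinKernel_le_one _ _))

lemma memLp_meanKernel (h : LocalDependence μ X Y) :
    MemLp (fun p : Ω × ℝ => meanKernel μ X Y p.2) 2 (μ.prod window) :=
  .of_bound (h.measurable_meanKernel.comp measurable_snd).aestronglyMeasurable _
    (ae_of_all _ fun p => h.abs_meanKernel_le p.2)

lemma memLp_kernelFluctuation (h : LocalDependence μ X Y) :
    MemLp (kernelFluctuation μ X Y) 2 (μ.prod window) :=
  h.memLp_randomKernel.sub h.memLp_meanKernel

lemma integral_meanKernel (h : LocalDependence μ X Y) :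
    ∫ t, meanKernel μ X Y t ∂window = ∫ p, randomKernel X Y p.2 p.1 ∂μ.prod window :=
  (integral_prod_symm _ h.integrable_randomKernel).symm

lemma integral_kernelFluctuation_sq (h : LocalDependence μ X Y) :
    ∫ p, kernelFluctuation μ X Y p ^ 2 ∂μ.prod window = r₅ μ X Y := by
  simp only [integral_prod_symm _ h.memLp_kernelFluctuation.integrable_sq,
    h.integral_kernelFluctuation_sq_left, r₅]

lemma integrable_abs_mul_kernelFluctuation_sq (h : LocalDependence μ X Y) :
    Integrable (fun p => |p.2| * kernelFluctuation μ X Y p ^ 2) (μ.prod window) := by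
  refine h.memLp_kernelFluctuation.integrable_sq.bdd_mul (c := 1)
    measurable_snd.abs.aestronglyMeasurable ?_
  filter_upwards [ae_prod_window_abs_le_one μ] with p hp
  simpa using hp

lemma sqrt_integral_abs_mul_kernelFluctuation_sq (h : LocalDependence μ X Y) :
    √(∫ p, |p.2| * kernelFluctuation μ X Y p ^ 2 ∂μ.prod window) = r₆ μ X Y := by
  simp only [integral_prod_symm _ h.integrable_abs_mul_kernelFluctuation_sq, integral_const_mul,
    h.integral_kernelFluctuation_sq_left, r₆]

lemma integral_mul_abs_randomKernel_le (h : LocalDependence μ X Y) {Z : Ω → ℝ} (hZ : MemLp Z 2 μ)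
    (hZ0 : 0 ≤ Z) :
    ∫ p, Z p.1 * (|p.2| * |randomKernel X Y p.2 p.1|) ∂μ.prod window ≤
      ∑ i, ∫ ω, Z ω * |X i ω| * min (Y i ω ^ 2) 1 ∂μ := by
  have hZX (i : ι) : Integrable (fun ω => Z ω * |X i ω|) μ := hZ.integrable_mul (h.memLp_left i).abs
  have hterm (i : ι) := integrable_prod_mul_abs_steinKernel (hZX i) (h.measurable_right i)
  calc ∫ p, Z p.1 * (|p.2| * |randomKernel X Y p.2 p.1|) ∂μ.prod window
      ≤ ∫ p, ∑ i, Z p.1 * |X i p.1| * (|p.2| * |steinKernel (Y i p.1) p.2|) ∂μ.prod window := by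
        refine integral_mono_of_nonneg (ae_of_all _ fun p => mul_nonneg (hZ0 p.1) (by positivity))
          (integrable_finsetSum _ fun i _ => hterm i) (ae_of_all _ fun p => ?_)
        simp only [mul_assoc, ← Finset.mul_sum, mul_left_comm |X _ _|]
        exact mul_le_mul_of_nonneg_left (mul_le_mul_of_nonneg_left
          (abs_randomKernel_le X Y p.2 p.1) (abs_nonneg _)) (hZ0 p.1)
    _ = ∑ i, ∫ p, Z p.1 * |X i p.1| * (|p.2| * |steinKernel (Y i p.1) p.2|) ∂μ.prod window :=
        integral_finsetSum _ fun i _ => hterm i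
    _ ≤ ∑ i, ∫ ω, Z ω * |X i ω| * min (Y i ω ^ 2) 1 ∂μ :=
        Finset.sum_le_sum fun i _ => integral_prod_mul_abs_steinKernel_le (hZX i)
          (fun ω => mul_nonneg (hZ0 ω) (abs_nonneg _)) (h.measurable_right i)

lemma integral_abs_mul_abs_meanKernel_le (h : LocalDependence μ X Y) :
    ∫ t, |t| * |meanKernel μ X Y t| ∂window ≤ r₃ μ X Y := by
  have hint : Integrable (fun p : Ω × ℝ => |p.2| * |randomKernel X Y p.2 p.1|)
      (μ.prod window) := by
    refine h.integrable_randomKernel.abs.bdd_mul (c := 1) measurable_snd.abs.aestronglyMeasurable ?_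
    filter_upwards [ae_prod_window_abs_le_one μ] with p hp
    simpa using hp
  calc ∫ t, |t| * |meanKernel μ X Y t| ∂window
      ≤ ∫ t, ∫ ω, |t| * |randomKernel X Y t ω| ∂μ ∂window := by
        refine integral_mono_of_nonneg (ae_of_all _ fun t => by positivity)
          hint.integral_prod_right (ae_of_all _ fun t => ?_)
        simp only [integral_const_mul]
        exact mul_le_mul_of_nonneg_left abs_integral_le_integral_abs (abs_nonneg t)
    _ = ∫ p, 1 * (|p.2| * |randomKernel X Y p.2 p.1|) ∂μ.prod window := by
        simp only [one_mul, integral_prod_symm _ hint]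
    _ ≤ r₃ μ X Y := by
        simpa only [one_mul, r₃] using
          h.integral_mul_abs_randomKernel_le (memLp_const 1) fun _ => zero_le_one

lemma memLp_comp_totalSum (h : LocalDependence μ X Y) {f : ℝ → ℝ} {M : NNReal}
    (hf : LipschitzWith M f) : MemLp (fun ω => f (totalSum X ω)) 2 μ := by
  have hlip : LipschitzWith M fun x => f x - f 0 := .of_dist_le_mul fun x y => by
    simpa using hf.dist_le_mul x y
  simpa [Function.comp_def, Pi.add_def] using
    (hlip.comp_memLp (sub_self _) h.memLp_totalSum).add (memLp_const (f 0))

lemma integral_totalSum_mul_comp (h : LocalDependence μ X Y) {f : ℝ → ℝ} {M : NNReal}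
    (hf : LipschitzWith M f) :
    ∫ ω, totalSum X ω * f (totalSum X ω) ∂μ =
      ∫ ω, ∑ i, X i ω * (f (totalSum X ω) - f (totalSum X ω - Y i ω)) ∂μ := by
  have hint (i : ι) : Integrable (fun ω => X i ω * f (totalSum X ω)) μ :=
    (h.memLp_left i).integrable_mul (h.memLp_comp_totalSum hf)
  have hterm (i : ι) : ∫ ω, X i ω * f (totalSum X ω) ∂μ =
      ∫ ω, X i ω * (f (totalSum X ω) - f (totalSum X ω - Y i ω)) ∂μ := by
    rw [← sub_eq_zero, ← integral_sub (hint i) (h.integrable_mul_sub_comp hf i),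
      ← h.integral_mul_comp_sub_eq_zero hf.continuous.measurable i]
    simp only [← mul_sub, sub_sub_cancel]
  calc ∫ ω, totalSum X ω * f (totalSum X ω) ∂μ
      = ∫ ω, ∑ i, X i ω * f (totalSum X ω) ∂μ := by simp only [← Finset.sum_mul, ← totalSum.eq_1]
    _ = ∫ ω, ∑ i, X i ω * (f (totalSum X ω) - f (totalSum X ω - Y i ω)) ∂μ := by
        rw [integral_finsetSum _ fun i _ => hint i, Finset.sum_congr rfl fun i _ => hterm i,
          integral_finsetSum _ fun i _ => h.integrable_mul_sub_comp hf i]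

lemma abs_integral_totalSum_mul_comp_sub_le (h : LocalDependence μ X Y) {f : ℝ → ℝ}
    (hf : ContDiff ℝ 1 f) {M : NNReal} (hM : ∀ x, |deriv f x| ≤ M) :
    |∫ ω, totalSum X ω * f (totalSum X ω) ∂μ -
      ∫ p, deriv f (totalSum X p.1 + p.2) * randomKernel X Y p.2 p.1 ∂μ.prod window| ≤
      M * r₂ μ X Y := by
  obtain ⟨hdiff, hcont⟩ := contDiff_one_iff_deriv.1 hf
  have hlip : LipschitzWith M f := lipschitzWith_of_nnnorm_deriv_le hdiff hM
  have hint : Integrable (fun p : Ω × ℝ =>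
      deriv f (totalSum X p.1 + p.2) * randomKernel X Y p.2 p.1) (μ.prod window) :=
    h.integrable_randomKernel.bdd_mul
      (h.measurable_comp_shift hcont.measurable).aestronglyMeasurable (ae_of_all _ fun p => hM _)
  have hftc (w y : ℝ) : f w - f (w - y) = ∫ t in -y..0, deriv f (w + t) := by
    rw [intervalIntegral.integral_comp_add_left, intervalIntegral.integral_deriv_eq_sub
      (fun x _ => hdiff x) (hcont.intervalIntegrable _ _), add_zero, ← sub_eq_add_neg]
  rw [h.integral_totalSum_mul_comp hlip, integral_prod _ hint, ← integral_sub
    (integrable_finsetSum _ fun i _ => h.integrable_mul_sub_comp hlip i) hint.integral_prod_left,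
    ← h.integral_sum_truncation, ← integral_const_mul]
  refine norm_integral_le_of_norm_le (G := ℝ)
    ((integrable_finsetSum _ fun i _ => h.integrable_truncation i).const_mul _)
    (ae_of_all _ fun ω => ?_)
  simp only [hftc]
  exact abs_sum_mul_intervalIntegral_sub_le X Y (by fun_prop) (fun t => hM _) ω

lemma one_sub_le_integral_meanKernel (h : LocalDependence μ X Y) :
    1 - r₂ μ X Y ≤ ∫ t, meanKernel μ X Y t ∂window := by
  have hXY : Integrable (fun ω => ∑ i, X i ω * Y i ω) μ :=
    integrable_finsetSum _ fun i _ => h.integrable_mul i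
  suffices 1 - ∫ t, meanKernel μ X Y t ∂window ≤ r₂ μ X Y by linarith
  rw [h.integral_meanKernel, integral_prod _ h.integrable_randomKernel, ← h.sum_integral_mul,
    ← integral_finsetSum _ fun i _ => h.integrable_mul i,
    ← integral_sub hXY h.integrable_randomKernel.integral_prod_left, ← h.integral_sum_truncation]
  exact integral_mono (hXY.sub h.integrable_randomKernel.integral_prod_left)
    (integrable_finsetSum _ fun i _ => h.integrable_truncation i) fun ω =>
      (le_abs_self _).trans (abs_sum_mul_sub_integral_randomKernel_le X Y ω)

lemma abs_integral_comp_totalSum_sub_le (h : LocalDependence μ X Y) {g : ℝ → ℝ}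
    (hg : Measurable g) (hbdd : ∀ x, |g x| ≤ 1) :
    |∫ ω, g (totalSum X ω) ∂μ -
      ∫ p, g (totalSum X p.1) * randomKernel X Y p.2 p.1 ∂μ.prod window| ≤
      r₁ μ X Y + r₂ μ X Y := by
  have hgW := hg.comp h.measurable_totalSum
  have hint : Integrable (fun p : Ω × ℝ => g (totalSum X p.1) * randomKernel X Y p.2 p.1)
      (μ.prod window) :=
    h.integrable_randomKernel.bdd_mul (hgW.comp measurable_fst).aestronglyMeasurable
      (ae_of_all _ fun p => hbdd _)
  have hdev : Integrable (fun ω => |∑ i, (X i ω * Y i ω - ∫ ω', X i ω' * Y i ω' ∂μ)|) μ :=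
    (integrable_finsetSum _ fun i _ => (h.integrable_mul i).sub (integrable_const _)).abs
  have htrunc := integrable_finsetSum Finset.univ fun i _ => h.integrable_truncation i
  have hgW_int : Integrable (fun ω => g (totalSum X ω)) μ :=
    .of_bound hgW.aestronglyMeasurable 1 (ae_of_all _ fun ω => hbdd _)
  rw [integral_prod _ hint, ← integral_sub hgW_int hint.integral_prod_left,
    ← h.integral_sum_truncation, r₁, ← integral_add hdev htrunc]
  refine norm_integral_le_of_norm_le (G := ℝ) (hdev.add htrunc) (ae_of_all _ fun ω => ?_)
  have hdev_eq : ∑ i, (X i ω * Y i ω - ∫ ω', X i ω' * Y i ω' ∂μ) = ∑ i, X i ω * Y i ω - 1 := by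
    rw [Finset.sum_sub_distrib, h.sum_integral_mul]
  simp only [integral_const_mul, hdev_eq]
  calc |g (totalSum X ω) - g (totalSum X ω) * ∫ t, randomKernel X Y t ω ∂window|
      = |g (totalSum X ω)| * |1 - ∫ t, randomKernel X Y t ω ∂window| := by
        rw [← abs_mul, mul_one_sub]
    _ ≤ |1 - ∫ t, randomKernel X Y t ω ∂window| :=
        mul_le_of_le_one_left (abs_nonneg _) (hbdd _)
    _ ≤ |∑ i, X i ω * Y i ω - 1| +
          |∑ i, X i ω * Y i ω - ∫ t, randomKernel X Y t ω ∂window| := by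
        rw [abs_sub_comm _ (1 : ℝ)]
        exact abs_sub_le _ _ _
    _ ≤ _ := by grw [abs_sum_mul_sub_integral_randomKernel_le X Y ω]

lemma abs_integral_shift_mul_meanKernel_le (h : LocalDependence μ X Y) {g : ℝ → ℝ}
    (hg : Measurable g) {C L : ℝ} (hC : ∀ x, |g x| ≤ C)
    (hL : ∀ t, |∫ w, (g (w + t) - g w) ∂μ.map (totalSum X)| ≤ |t| * L) :
    |∫ p, (g (totalSum X p.1 + p.2) - g (totalSum X p.1)) * meanKernel μ X Y p.2
      ∂μ.prod window| ≤ L * r₃ μ X Y := by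
  have hint :=
    h.integrable_comp_shift_sub_mul hg hC (h.memLp_meanKernel.integrable one_le_two)
  have hweight : Integrable (fun t => L * (|t| * |meanKernel μ X Y t|)) window := by
    refine .const_mul (.of_bound (measurable_id.abs.mul
      h.measurable_meanKernel.abs).aestronglyMeasurable (1 * ∑ i, ∫ ω, |X i ω| ∂μ) ?_) L
    filter_upwards [ae_window_abs_le_one] with t ht
    simpa [abs_mul] using mul_le_mul ht (h.abs_meanKernel_le t) (abs_nonneg _) zero_le_one
  have hL0 : 0 ≤ L := by simpa using (abs_nonneg _).trans (hL 1)
  rw [integral_prod_symm _ hint]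
  calc _ ≤ ∫ t, L * (|t| * |meanKernel μ X Y t|) ∂window := by
        refine norm_integral_le_of_norm_le (G := ℝ) hweight (ae_of_all _ fun t => ?_)
        have hmap := integral_map (μ := μ) h.measurable_totalSum.aemeasurable
          ((hg.comp (measurable_id.add_const t)).sub hg).aestronglyMeasurable
        simp only [integral_mul_const, norm_mul, norm_eq_abs]
        rw [← mul_assoc, mul_comm L]
        exact mul_le_mul_of_nonneg_right (hmap ▸ hL t) (abs_nonneg _)
    _ ≤ L * r₃ μ X Y := by
        rw [integral_const_mul]
        exact mul_le_mul_of_nonneg_left h.integral_abs_mul_abs_meanKernel_le hL0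

end Probability

end LocalDependence

end LocalDependence

section BerryEsseen

variable {Ω ι : Type*} [MeasurableSpace Ω] [Fintype ι] {μ : Measure Ω} [IsProbabilityMeasure μ]
  {X Y : ι → Ω → ℝ}

namespace LocalDependence

lemma integrable_ramp_shift_sq_div (h : LocalDependence μ X Y) {α : ℝ} (hα : 0 < α) (u : ℝ) :
    Integrable (fun p : Ω × ℝ =>
      (ramp α u (totalSum X p.1 + p.2) - ramp α u (totalSum X p.1)) ^ 2 / |p.2|)
      (μ.prod window) := by
  refine .of_bound (((h.measurable_comp_shift_sub (continuous_ramp α u).measurable).pow_const 2).div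
    measurable_snd.abs).aestronglyMeasurable (α ^ 2)⁻¹ ?_
  filter_upwards [ae_prod_window_abs_le_one μ] with p hp
  have hlip := abs_ramp_sub_le hα u (totalSum X p.1 + p.2) (totalSum X p.1)
  rw [add_sub_cancel_left] at hlip
  rw [norm_eq_abs, abs_div, abs_abs, abs_pow]
  refine div_le_of_le_mul₀ (abs_nonneg _) (by positivity) ?_
  calc _ ≤ (|p.2| / α) ^ 2 := by gcongr
    _ = (α ^ 2)⁻¹ * (|p.2| * |p.2|) := by field
    _ ≤ (α ^ 2)⁻¹ * |p.2| := by
      gcongr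
      exact mul_le_of_le_one_left (abs_nonneg _) hp

lemma integral_ramp_shift_sq_div_le (h : LocalDependence μ X Y) {α S : ℝ} (hα : 0 < α)
    (hS : ∀ x, cdf (μ.map (totalSum X)) (x + α) - cdf (μ.map (totalSum X)) x ≤ S) (u : ℝ) :
    ∫ p, (ramp α u (totalSum X p.1 + p.2) - ramp α u (totalSum X p.1)) ^ 2 / |p.2|
      ∂μ.prod window ≤ 2 * (S / α) := by
  have hint := h.integrable_ramp_shift_sq_div hα u
  have hprob := Measure.isProbabilityMeasure_map (μ := μ) h.measurable_totalSum.aemeasurable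
  have hramp := (continuous_ramp α u).measurable
  have hS0 : 0 ≤ S / α :=
    div_nonneg ((sub_nonneg.2 (monotone_cdf _ (by linarith))).trans (hS 0)) hα.le
  rw [integral_prod_symm _ hint]
  calc _ ≤ ∫ _, S / α ∂window := by
        refine integral_mono hint.integral_prod_right (integrable_const _) fun t => ?_
        have hmap := integral_map (μ := μ) h.measurable_totalSum.aemeasurable
          (((hramp.comp (measurable_id.add_const t)).sub hramp).pow_const 2).aestronglyMeasurable
        simp only [integral_div]
        refine div_le_of_le_mul₀ (abs_nonneg t) hS0 ?_
        rw [mul_comm]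
        exact hmap ▸ integral_ramp_shift_sq_le hα hS u t
    _ = 2 * (S / α) := by rw [integral_const, window_real_univ, smul_eq_mul]

lemma abs_integral_ramp_shift_mul_kernelFluctuation_le (h : LocalDependence μ X Y) {α S : ℝ}
    (hα : 0 < α)
    (hS : ∀ x, cdf (μ.map (totalSum X)) (x + α) - cdf (μ.map (totalSum X)) x ≤ S) (u : ℝ) :
    |∫ p, (ramp α u (totalSum X p.1 + p.2) - ramp α u (totalSum X p.1)) *
      kernelFluctuation μ X Y p ∂μ.prod window| ≤ √(2 * (S / α)) * r₆ μ X Y := by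
  have hcs := abs_integral_mul_le_sqrt_div_mul_sqrt
    (h.measurable_comp_shift_sub (continuous_ramp α u).measurable).aestronglyMeasurable
    h.memLp_kernelFluctuation.aestronglyMeasurable
    measurable_snd.abs.aestronglyMeasurable (fun p => abs_nonneg p.2)
    (fun p hp => by simp [abs_eq_zero.1 hp]) (h.integrable_ramp_shift_sq_div hα u)
    h.integrable_abs_mul_kernelFluctuation_sq
  rw [h.sqrt_integral_abs_mul_kernelFluctuation_sq] at hcs
  refine hcs.trans (mul_le_mul_of_nonneg_right ?_ (sqrt_nonneg _))
  exact sqrt_le_sqrt (h.integral_ramp_shift_sq_div_le hα hS u)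

lemma abs_integral_mul_steinSolution_shift_le (h : LocalDependence μ X Y) {g : ℝ → ℝ}
    (hcont : Continuous g) (hmem : ∀ x, g x ∈ Set.Icc 0 1) :
    |∫ p, ((totalSum X p.1 + p.2) * steinSolution g (totalSum X p.1 + p.2) -
        totalSum X p.1 * steinSolution g (totalSum X p.1)) * randomKernel X Y p.2 p.1
      ∂μ.prod window| ≤ r₄ μ X Y + 3 * r₃ μ X Y := by
  have hZ : MemLp (fun ω => |totalSum X ω| + 3) 2 μ := h.memLp_totalSum.abs.add (memLp_const 3)
  have hZ0 : 0 ≤ fun ω => |totalSum X ω| + 3 := fun ω => add_nonneg (abs_nonneg _) zero_le_three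
  have hdom : Integrable (fun p : Ω × ℝ =>
      (|totalSum X p.1| + 3) * (|p.2| * |randomKernel X Y p.2 p.1|)) (μ.prod window) := by
    simp only [mul_left_comm (_ + _)]
    refine ((hZ.comp_fst window).integrable_mul h.memLp_randomKernel.abs).bdd_mul (c := 1)
      measurable_snd.abs.aestronglyMeasurable ?_
    filter_upwards [ae_prod_window_abs_le_one μ] with p hp
    simpa using hp
  calc _ ≤ ∫ p, (|totalSum X p.1| + 3) * (|p.2| * |randomKernel X Y p.2 p.1|)
        ∂μ.prod window := by
        refine norm_integral_le_of_norm_le (G := ℝ) hdom (ae_of_all _ fun p => ?_)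
        have hle := abs_mul_steinSolution_sub_le hcont hmem (totalSum X p.1) (totalSum X p.1 + p.2)
        rw [sub_add_cancel_left, abs_neg, abs_sub_comm, mul_comm |p.2|] at hle
        rw [norm_mul, ← mul_assoc]
        exact mul_le_mul_of_nonneg_right hle (abs_nonneg _)
    _ ≤ ∑ i, ∫ ω, (|totalSum X ω| + 3) * |X i ω| * min (Y i ω ^ 2) 1 ∂μ :=
        h.integral_mul_abs_randomKernel_le hZ hZ0
    _ = r₄ μ X Y + 3 * r₃ μ X Y := by
        rw [r₄, r₃, Finset.mul_sum, ← Finset.sum_add_distrib]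
        refine Finset.sum_congr rfl fun i _ => ?_
        have hX := integrable_mul_min_sq (h.integrable_left i).abs (h.measurable_right i)
        have hWX := integrable_mul_min_sq
          (h.memLp_totalSum.integrable_mul (h.memLp_left i)).abs (h.measurable_right i)
        simp only [Pi.mul_apply, abs_mul] at hWX
        simp only [abs_mul, add_mul, mul_assoc (3 : ℝ)]
        rw [integral_add hWX (hX.const_mul 3), integral_const_mul]

lemma abs_integral_deriv_steinSolution_shift_le (h : LocalDependence μ X Y) {α S : ℝ} (hα : 0 < α)
    (hS : ∀ x, cdf (μ.map (totalSum X)) (x + α) - cdf (μ.map (totalSum X)) x ≤ S) (u : ℝ) :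
    |∫ p, (deriv (steinSolution (ramp α u)) (totalSum X p.1 + p.2) -
        deriv (steinSolution (ramp α u)) (totalSum X p.1)) * randomKernel X Y p.2 p.1
      ∂μ.prod window| ≤
      r₄ μ X Y + (3 + S / α) * r₃ μ X Y + √(2 * (S / α)) * r₆ μ X Y := by
  have hprob := Measure.isProbabilityMeasure_map (μ := μ) h.measurable_totalSum.aemeasurable
  have hcont := continuous_ramp α u
  have hmem := ramp_mem_Icc α u
  have hramp_bdd (x : ℝ) : |ramp α u x| ≤ 1 := by
    rw [abs_of_nonneg (hmem x).1]
    exact (hmem x).2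
  have hmean := h.abs_integral_shift_mul_meanKernel_le hcont.measurable hramp_bdd
    fun t => abs_integral_ramp_shift_le hα hS u t
  have hfluct := h.abs_integral_ramp_shift_mul_kernelFluctuation_le hα hS u
  have hlinear := h.abs_integral_mul_steinSolution_shift_le hcont hmem
  have hlinear_int := h.integrable_comp_shift_sub_mul
    (g := fun w => w * steinSolution (ramp α u) w)
    (continuous_id.mul (contDiff_steinSolution hcont hmem).continuous).measurable
    (abs_mul_steinSolution_le hcont hmem) h.integrable_randomKernel
  have hmean_int := h.integrable_comp_shift_sub_mul hcont.measurable hramp_bdd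
    (h.memLp_meanKernel.integrable one_le_two)
  have hfluct_int := h.integrable_comp_shift_sub_mul hcont.measurable hramp_bdd
    (h.memLp_kernelFluctuation.integrable one_le_two)
  have hsplit := integral_add hlinear_int (hmean_int.add hfluct_int)
  rw [integral_add' hmean_int hfluct_int] at hsplit
  calc _ = |_| := congrArg _ ((integral_congr_ae (ae_of_all _ fun p => ?_)).trans hsplit)
    _ ≤ _ := (abs_add_le _ _).trans (add_le_add hlinear ((abs_add_le _ _).trans
      (add_le_add hmean hfluct)))
    _ = _ := by ring
  simp only [deriv_steinSolution hcont hmem, Pi.add_apply, kernelFluctuation]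
  ring

lemma abs_integral_ramp_sub_gaussianReal_le (h : LocalDependence μ X Y) {α S : ℝ} (hα : 0 < α)
    (hS : ∀ x, cdf (μ.map (totalSum X)) (x + α) - cdf (μ.map (totalSum X)) x ≤ S) (u : ℝ) :
    |∫ w, ramp α u w ∂μ.map (totalSum X) - ∫ w, ramp α u w ∂gaussianReal 0 1| ≤
      r₁ μ X Y + 2 * r₂ μ X Y + (3 + S / α) * r₃ μ X Y + r₄ μ X Y +
        √(2 * (S / α)) * r₆ μ X Y := by
  have hcont := continuous_ramp α u
  have hmem := ramp_mem_Icc α u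
  have hprob := Measure.isProbabilityMeasure_map (μ := μ) h.measurable_totalSum.aemeasurable
  set f := steinSolution (ramp α u) with hf
  have hsmooth : ContDiff ℝ 1 f := contDiff_steinSolution hcont hmem
  have hderiv_meas : Measurable (deriv f) := (contDiff_one_iff_deriv.1 hsmooth).2.measurable
  have hderiv_le (w : ℝ) : |deriv f w| ≤ 1 := abs_deriv_steinSolution_le_one hcont hmem w
  have hstein := integral_deriv_steinSolution hcont hmem (μ.map (totalSum X))
  rw [← hf, integral_map h.measurable_totalSum.aemeasurable hderiv_meas.aestronglyMeasurable,
    integral_map (f := fun w => w * f w) h.measurable_totalSum.aemeasurable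
      (continuous_id.mul hsmooth.continuous).aestronglyMeasurable] at hstein
  have hidentity := h.abs_integral_totalSum_mul_comp_sub_le hsmooth (M := 1) hderiv_le
  have hkernel := h.abs_integral_comp_totalSum_sub_le hderiv_meas hderiv_le
  have hshift := h.abs_integral_deriv_steinSolution_shift_le hα hS u
  have hdiff : ∫ p, (deriv f (totalSum X p.1 + p.2) - deriv f (totalSum X p.1)) *
      randomKernel X Y p.2 p.1 ∂μ.prod window =
      ∫ p, deriv f (totalSum X p.1 + p.2) * randomKernel X Y p.2 p.1 ∂μ.prod window -
      ∫ p, deriv f (totalSum X p.1) * randomKernel X Y p.2 p.1 ∂μ.prod window := by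
    simp only [sub_mul]
    exact integral_sub
      (h.integrable_randomKernel.bdd_mul (h.measurable_comp_shift hderiv_meas).aestronglyMeasurable
        (ae_of_all _ fun p => hderiv_le _))
      (h.integrable_randomKernel.bdd_mul (hderiv_meas.comp
        (h.measurable_totalSum.comp measurable_fst)).aestronglyMeasurable
        (ae_of_all _ fun p => hderiv_le _))
  rw [← hf, hdiff] at hshift
  rw [NNReal.coe_one, one_mul] at hidentity
  rw [abs_le] at *
  constructor <;> linarith

lemma abs_integral_shift_mul_randomKernel_le (h : LocalDependence μ X Y) {g : ℝ → ℝ} {c d : ℝ}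
    (hcd : c ≤ d) (hcont : Continuous g) (hmem : ∀ x, g x ∈ Set.Icc 0 1)
    (hzero : ∀ x, x ∉ Set.Ioo c d → g x = 0) :
    |∫ p, g (totalSum X p.1 + p.2) * randomKernel X Y p.2 p.1 ∂μ.prod window| ≤
      (d - c) / 2 + r₂ μ X Y := by
  set f : ℝ → ℝ := fun w => ∫ x in (c + d) / 2..w, g x
  have hf_le (w : ℝ) : |f w| ≤ (d - c) / 2 := abs_integral_from_midpoint_le hcd hcont hmem hzero w
  have hderiv : deriv f = g := funext fun w => hcont.deriv_integral g _ w
  have hsmooth : ContDiff ℝ 1 f := contDiff_one_iff_deriv.2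
    ⟨fun w => (hcont.integral_hasStrictDerivAt _ w).hasDerivAt.differentiableAt, hderiv ▸ hcont⟩
  have hstein := h.abs_integral_totalSum_mul_comp_sub_le hsmooth (M := 1) fun w => by
    simpa [hderiv, abs_of_nonneg (hmem w).1] using (hmem w).2
  have hleft : |∫ ω, totalSum X ω * f (totalSum X ω) ∂μ| ≤ (d - c) / 2 := by
    have hW_int := (h.memLp_totalSum.integrable one_le_two).abs
    calc _ ≤ ∫ ω, |totalSum X ω| * ((d - c) / 2) ∂μ := by
          refine norm_integral_le_of_norm_le (G := ℝ) (hW_int.mul_const _)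
            (ae_of_all _ fun ω => ?_)
          rw [norm_mul]
          exact mul_le_mul_of_nonneg_left (hf_le _) (abs_nonneg _)
      _ ≤ (d - c) / 2 := by
          rw [integral_mul_const]
          exact mul_le_of_le_one_left (by linarith) h.integral_abs_totalSum_le_one
  rw [hderiv, NNReal.coe_one, one_mul] at hstein
  rw [abs_le] at *
  constructor <;> linarith

lemma neg_le_integral_shift_mul_kernelFluctuation (h : LocalDependence μ X Y) {g : ℝ → ℝ}
    {c d : ℝ} (hcd : c ≤ d) (hcont : Continuous g) (hmem : ∀ x, g x ∈ Set.Icc 0 1)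
    (hzero : ∀ x, x ∉ Set.Ioo c d → g x = 0) :
    -((d - c) / 8 + 2 * r₅ μ X Y) ≤
      ∫ p, g (totalSum X p.1 + p.2) * kernelFluctuation μ X Y p ∂μ.prod window := by
  have hbdd (x : ℝ) : ‖g x‖ ≤ 1 := by simpa [abs_of_nonneg (hmem x).1] using (hmem x).2
  have hg_meas := (h.measurable_comp_shift hcont.measurable).aestronglyMeasurable
    (μ := μ.prod window)
  have hD_int := h.memLp_kernelFluctuation.integrable_sq.const_mul 2
  have hg_int : Integrable (fun p : Ω × ℝ => g (totalSum X p.1 + p.2) ^ 2) (μ.prod window) :=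
    (MemLp.of_bound hg_meas 1 (ae_of_all _ fun p => hbdd _)).integrable_sq
  have hg_sq : ∫ p, g (totalSum X p.1 + p.2) ^ 2 ∂μ.prod window ≤ d - c := by
    rw [integral_prod _ hg_int]
    simpa using integral_mono hg_int.integral_prod_left (integrable_const (d - c))
      fun ω => integral_window_sq_shift_le hcd hcont hmem hzero (totalSum X ω)
  calc -((d - c) / 8 + 2 * r₅ μ X Y)
      ≤ ∫ p, -(g (totalSum X p.1 + p.2) ^ 2 / 8 + 2 * kernelFluctuation μ X Y p ^ 2)
          ∂μ.prod window := by
        rw [integral_neg, integral_add (hg_int.div_const 8) hD_int, integral_div,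
          integral_const_mul, h.integral_kernelFluctuation_sq]
        linarith
    _ ≤ ∫ p, g (totalSum X p.1 + p.2) * kernelFluctuation μ X Y p ∂μ.prod window :=
        integral_mono ((hg_int.div_const 8).add hD_int).neg
          ((h.memLp_kernelFluctuation.integrable one_le_two).bdd_mul hg_meas
            (ae_of_all _ fun p => hbdd _))
          fun p => by
            dsimp only
            nlinarith [sq_nonneg (g (totalSum X p.1 + p.2) + 4 * kernelFluctuation μ X Y p)]

lemma integral_comp_totalSum_sub_le_integral_shift_mul_meanKernel (h : LocalDependence μ X Y)
    {g : ℝ → ℝ} (hg : Measurable g) (hmem : ∀ x, g x ∈ Set.Icc 0 1) {L : ℝ}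
    (hL : ∀ t, |∫ w, (g (w + t) - g w) ∂μ.map (totalSum X)| ≤ |t| * L) :
    ∫ w, g w ∂μ.map (totalSum X) - r₂ μ X Y - L * r₃ μ X Y ≤
      ∫ p, g (totalSum X p.1 + p.2) * meanKernel μ X Y p.2 ∂μ.prod window := by
  have hprob := Measure.isProbabilityMeasure_map (μ := μ) h.measurable_totalSum.aemeasurable
  have hbdd (x : ℝ) : |g x| ≤ 1 := by simpa [abs_of_nonneg (hmem x).1] using (hmem x).2
  have hmean_int := h.memLp_meanKernel.integrable one_le_two
  have hgW_int : Integrable (fun p : Ω × ℝ => g (totalSum X p.1) * meanKernel μ X Y p.2)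
      (μ.prod window) :=
    hmean_int.bdd_mul (hg.comp (h.measurable_totalSum.comp measurable_fst)).aestronglyMeasurable
      (ae_of_all _ fun p => hbdd _)
  have hshift := h.abs_integral_shift_mul_meanKernel_le hg hbdd hL
  simp only [sub_mul] at hshift
  rw [integral_sub (hmean_int.bdd_mul (h.measurable_comp_shift hg).aestronglyMeasurable
      (ae_of_all _ fun p => hbdd _)) hgW_int,
    integral_prod_mul (fun ω => g (totalSum X ω)) (meanKernel μ X Y),
    ← integral_map h.measurable_totalSum.aemeasurable hg.aestronglyMeasurable] at hshift
  have hE0 : 0 ≤ ∫ w, g w ∂μ.map (totalSum X) := integral_nonneg fun w => (hmem w).1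
  have hE1 : ∫ w, g w ∂μ.map (totalSum X) ≤ 1 := by
    simpa using integral_mono (μ := μ.map (totalSum X))
      (.of_bound hg.aestronglyMeasurable 1 (ae_of_all _ hbdd)) (integrable_const 1)
      fun w => (hmem w).2
  have hmean := mul_le_mul_of_nonneg_left h.one_sub_le_integral_meanKernel hE0
  have hr₂ := mul_le_of_le_one_left (r₂_nonneg μ X Y) hE1
  linarith [(abs_le.1 hshift).1]

lemma cdf_sub_le_of_modulus (h : LocalDependence μ X Y) {γ S a b : ℝ} (hγ : 0 < γ)
    (hab : a ≤ b)
    (hS : ∀ x, cdf (μ.map (totalSum X)) (x + γ) - cdf (μ.map (totalSum X)) x ≤ S) :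
    cdf (μ.map (totalSum X)) b - cdf (μ.map (totalSum X)) a ≤
      5 / 8 * (b - a) + 5 / 4 * γ + 2 * r₂ μ X Y + 2 * r₅ μ X Y + S / γ * r₃ μ X Y := by
  have hprob := Measure.isProbabilityMeasure_map (μ := μ) h.measurable_totalSum.aemeasurable
  have hcd : a - γ ≤ b + γ := by linarith
  have hcont := continuous_plateau γ a b
  have hmem := plateau_mem_Icc hγ hab
  have hzero (x : ℝ) : x ∉ Set.Ioo (a - γ) (b + γ) → plateau γ a b x = 0 := plateau_eq_zero hγ hab
  have hbdd := abs_plateau_le_one hγ hab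
  have hcdf := cdf_sub_le_integral_plateau (μ.map (totalSum X)) hγ a b
  have hupper := h.abs_integral_shift_mul_randomKernel_le hcd hcont hmem hzero
  have hmean := h.integral_comp_totalSum_sub_le_integral_shift_mul_meanKernel hcont.measurable
    hmem fun t => abs_integral_plateau_shift_le hγ hS a b t
  have hfluct := h.neg_le_integral_shift_mul_kernelFluctuation hcd hcont hmem hzero
  have hshift_meas := (h.measurable_comp_shift hcont.measurable).aestronglyMeasurable
    (μ := μ.prod window)
  have hsplit := integral_add
    ((h.memLp_meanKernel.integrable one_le_two).bdd_mul hshift_meas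
      (ae_of_all _ fun p => hbdd _))
    ((h.memLp_kernelFluctuation.integrable one_le_two).bdd_mul hshift_meas
      (ae_of_all _ fun p => hbdd _))
  simp only [← mul_add, kernelFluctuation, add_sub_cancel] at hsplit hfluct
  linarith [(abs_le.1 hupper).2]

lemma cdf_add_sub_le (h : LocalDependence μ X Y) {α : ℝ} (hα : 0 ≤ α) (x : ℝ) :
    cdf (μ.map (totalSum X)) (x + α) - cdf (μ.map (totalSum X)) x ≤
      5 / 8 * α + 25 / 4 * r₃ μ X Y + 4 * r₂ μ X Y + 4 * r₅ μ X Y := by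
  have hr₃ := h.r₃_pos
  set γ := 2 * r₃ μ X Y with hγ_def
  have hγ : 0 < γ := by positivity
  set F := cdf (μ.map (totalSum X))
  set S := ⨆ y, (F (y + γ) - F y)
  have hS (y : ℝ) : F (y + γ) - F y ≤ S := by
    refine le_ciSup (f := fun y => F (y + γ) - F y) ⟨1, ?_⟩ y
    rintro _ ⟨y, rfl⟩
    linarith [cdf_le_one (μ.map (totalSum X)) (y + γ), cdf_nonneg (μ.map (totalSum X)) y]
  have hhalf : S / γ * r₃ μ X Y = S / 2 := by
    rw [hγ_def]
    field
  have hS_le : S ≤ 5 / 8 * γ + 5 / 4 * γ + 2 * r₂ μ X Y + 2 * r₅ μ X Y + S / 2 := by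
    refine ciSup_le fun y => ?_
    simpa [hhalf] using h.cdf_sub_le_of_modulus hγ (le_add_of_nonneg_right hγ.le) hS
  have hle := h.cdf_sub_le_of_modulus hγ (le_add_of_nonneg_right hα) hS (a := x)
  rw [hhalf, add_sub_cancel_left] at hle
  linarith

end LocalDependence

open LocalDependence in
theorem stmt_0_general (h : LocalDependence μ X Y) (z : ℝ) :
    |(μ {ω | totalSum X ω ≤ z}).toReal - stdGaussianCDF z| ≤
      r₁ μ X Y + 4 * r₂ μ X Y + 8 * r₃ μ X Y + r₄ μ X Y + 4.5 * r₅ μ X Y + 1.5 * r₆ μ X Y := by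
  have hprob := Measure.isProbabilityMeasure_map (μ := μ) h.measurable_totalSum.aemeasurable
  have hcdf : (μ {ω | totalSum X ω ≤ z}).toReal = cdf (μ.map (totalSum X)) z := by
    rw [cdf_eq_real, map_measureReal_apply h.measurable_totalSum measurableSet_Iic]
    rfl
  have hr₂ := r₂_nonneg μ X Y
  have hr₃ := h.r₃_pos
  have hr₅ := r₅_nonneg μ X Y
  set α := 25 / 2 * r₃ μ X Y + 8 * r₂ μ X Y + 8 * r₅ μ X Y with hα_def
  have hα : 0 < α := by positivity
  have hS (x : ℝ) :
      cdf (μ.map (totalSum X)) (x + α) - cdf (μ.map (totalSum X)) x ≤ 9 / 8 * α := by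
    linarith [h.cdf_add_sub_le hα.le x]
  have hsqrt : √(2 * (9 / 8 * α / α)) = 3 / 2 := by
    rw [mul_div_cancel_right₀ _ hα.ne', sqrt_eq_iff_mul_self_eq (by norm_num) (by norm_num)]
    norm_num
  have hramp := h.abs_integral_ramp_sub_gaussianReal_le hα hS
  rw [hsqrt, mul_div_cancel_right₀ _ hα.ne'] at hramp
  have hmain := abs_cdf_sub_stdGaussianCDF_le (μ.map (totalSum X)) hα hramp z
  rw [hcdf]
  linarith

end BerryEsseen

theorem stmt_0
    {Ω : Type*} [MeasurableSpace Ω] {μ : Measure Ω} [IsProbabilityMeasure μ]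
    {ι : Type*} [Fintype ι] [DecidableEq ι]
    (X : ι → Ω → ℝ) (A : ι → Finset ι)
    (hXmeas : ∀ i, Measurable (X i))
    (hXmean : ∀ i, ∫ ω, X i ω ∂μ = 0)
    (hXsq : ∀ i, Integrable (fun ω => (X i ω) ^ 2) μ)
    (hiA : ∀ i, i ∈ A i)
    (hLD1 : ∀ i, IndepFun (X i) (fun ω => fun j : ((A i)ᶜ : Finset ι) => X j.1 ω) μ)
    (W : Ω → ℝ) (hW : ∀ ω, W ω = ∑ i, X i ω)
    (hWvar : ∫ ω, (W ω) ^ 2 ∂μ = 1)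
    (Y : ι → Ω → ℝ) (hY : ∀ i ω, Y i ω = ∑ j ∈ A i, X j ω)
    (Khat : ℝ → Ω → ℝ)
    (hKhat : ∀ t ω, Khat t ω = ∑ i, X i ω *
      ((if -(Y i ω) ≤ t ∧ t < 0 then (1 : ℝ) else 0)
        - (if 0 ≤ t ∧ t ≤ -(Y i ω) then (1 : ℝ) else 0)))
    (r1 r2 r3 r4 r5 r6 : ℝ)
    (hr1 : r1 = ∫ ω, |∑ i, (X i ω * Y i ω - ∫ ω', X i ω' * Y i ω' ∂μ)| ∂μ)
    (hr2 : r2 = ∑ i, ∫ ω, (if 1 < |Y i ω| then |X i ω * Y i ω| else 0) ∂μ)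
    (hr3 : r3 = ∑ i, ∫ ω, |X i ω| * min ((Y i ω) ^ 2) 1 ∂μ)
    (hr4 : r4 = ∑ i, ∫ ω, |W ω * X i ω| * min ((Y i ω) ^ 2) 1 ∂μ)
    (hr5 : r5 = ∫ t in Set.Icc (-1 : ℝ) 1, variance (Khat t) μ)
    (hr6 : r6 = Real.sqrt (∫ t in Set.Icc (-1 : ℝ) 1, |t| * variance (Khat t) μ)) :
    ∀ z : ℝ, |(μ {ω | W ω ≤ z}).toReal - stdGaussianCDF z| ≤
      r1 + 4 * r2 + 8 * r3 + r4 + 4.5 * r5 + 1.5 * r6 := by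
  obtain rfl : W = totalSum X := funext hW
  obtain rfl : Y = fun i ω => ∑ j ∈ A i, X j ω := funext₂ hY
  obtain rfl : Khat = randomKernel X fun i ω => ∑ j ∈ A i, X j ω := funext₂ hKhat
  subst hr1 hr2 hr3 hr4 hr5 hr6
  exact stmt_0_general (.of_indepFun_compl hXmeas
    (fun i => (memLp_two_iff_integrable_sq (hXmeas i).aestronglyMeasurable).2 (hXsq i))
    hXmean hLD1 hWvar)
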